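/- Fix B > 1 and α ∈ (0,1], and let 𝒟_{Box,Lip,B} be the set of laws on ℝ^d whose densities are 1-Lipschitz, supported on [−1,1]^d, and take values in [1/B, B]. There exist an estimator sequence 𝓔 and constants C and k (depending only on d, B, and α) such that for every P ∈ 𝒟_{Box,Lip,B} that is not log-concave, writing ε = d_H(p, 𝓛) > 0, the ULR rejection time τ_α = inf{ t : R_t ≥ 1/α } satisfies E_{P^∞}[τ_α] ≤ C · ε^{−2(d+3)} · (1 + log(1/ε))^{k}. -/

import Mathlib

open MeasureTheory ProbabilityTheory Filter Finset Matrix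
open scoped Classical

noncomputable section

namespace SeqTest

/-- `ℝ^d`. -/
abbrev RV (d : ℕ) := Fin d → ℝ

/-- The sequence space `Ω = (ℝ^d)^ℕ`. -/
abbrev Seq (d : ℕ) := ℕ → RV d

variable (d : ℕ)


/-- The first `t` coordinates of a sequence. -/
def prefixMap (t : ℕ) : Seq d → (Fin t → RV d) := fun ω s => ω s

/-- The law of the first `t` coordinates under a sequential law `μ`. -/
def prefixLaw (μ : Measure (Seq d)) (t : ℕ) : Measure (Fin t → RV d) :=
  μ.map (prefixMap d t)

/-- The natural filtration of the coordinate process: `ℱ t = σ(X_0, …, X_{t-1})`. -/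
def F : Filtration ℕ (inferInstance : MeasurableSpace (Seq d)) where
  seq t := ⨆ s ∈ Finset.range t, MeasurableSpace.comap (fun ω : Seq d => ω s) inferInstance
  mono' := by
    intro i j hij
    exact biSup_mono fun s hs => Finset.mem_range.mpr
      (lt_of_lt_of_le (Finset.mem_range.mp hs) hij)
  le' := by
    intro t
    refine iSup₂_le fun s _ => ?_
    exact measurable_iff_comap_le.mp (measurable_pi_apply s)

/-- Local absolute continuity of sequential laws: every prefix law of `μ` is
absolutely continuous w.r.t. the corresponding prefix law of `Γ`. -/
def LocAC (μ Γ : Measure (Seq d)) : Prop := ∀ t, prefixLaw d μ t ≪ prefixLaw d Γ t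

/-- The density (likelihood-ratio) process `Z_t^μ = d(μ|_t)/d(Γ|_t)` evaluated along the path. -/
def Z (μ Γ : Measure (Seq d)) (t : ℕ) (ω : Seq d) : ℝ :=
  ((prefixLaw d μ t).rnDeriv (prefixLaw d Γ t) (prefixMap d t ω)).toReal

/-- The standard Gaussian measure on `ℝ^d`. -/
def stdGaussian : Measure (RV d) := Measure.pi fun _ => gaussianReal 0 1

/-- `Γ` is the law of an i.i.d. sequence of standard Gaussians: characterized through its
finite-dimensional rectangle probabilities. -/
def IsGamma (Γ : Measure (Seq d)) : Prop :=
  IsProbabilityMeasure Γ ∧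
    ∀ (t : ℕ) (A : Fin t → Set (RV d)), (∀ s, MeasurableSet (A s)) →
      prefixLaw d Γ t (Set.univ.pi A) = ∏ s, stdGaussian d (A s)

/-- `M` is a nonnegative supermartingale for the sequential law `μ`
(w.r.t. the natural filtration). -/
def IsNSM (μ : Measure (Seq d)) (M : ℕ → Seq d → ℝ) : Prop :=
  (∀ t ω, 0 ≤ M t ω) ∧ Supermartingale M (F d) μ

/-- `M` is a nonnegative martingale for the sequential law `μ`. -/
def IsNM (μ : Measure (Seq d)) (M : ℕ → Seq d → ℝ) : Prop :=
  (∀ t ω, 0 ≤ M t ω) ∧ Martingale M (F d) μ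


/-- `R` is the `(s,h)`-fork-convex combination of `P` with `Q` (relative to the
reference law `Γ`), described through its density process. -/
def IsFCC (Γ P Q : Measure (Seq d)) (s : ℕ) (h : Seq d → ℝ) (R : Measure (Seq d)) : Prop :=
  IsProbabilityMeasure P ∧ IsProbabilityMeasure Q ∧ LocAC d P Γ ∧ LocAC d Q Γ ∧
  Measurable[F d s] h ∧ (∀ ω, h ω ∈ Set.Icc (0 : ℝ) 1) ∧
  Γ {ω | h ω < 1 ∧ Z d Q Γ s ω = 0} = 0 ∧
  IsProbabilityMeasure R ∧ LocAC d R Γ ∧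
  ∀ t : ℕ, (fun ω => Z d R Γ t ω) =ᵐ[Γ]
    (fun ω => if t ≤ s then Z d P Γ t ω
      else h ω * Z d P Γ t ω + (1 - h ω) * Z d Q Γ t ω * (Z d P Γ s ω / Z d Q Γ s ω))

/-- A set of sequential laws is fork-convex if it is closed under fork-convex combinations. -/
def IsForkConvex (Γ : Measure (Seq d)) (S : Set (Measure (Seq d))) : Prop :=
  ∀ P ∈ S, ∀ Q ∈ S, ∀ (s : ℕ) (h : Seq d → ℝ) (R : Measure (Seq d)),
    IsFCC d Γ P Q s h R → R ∈ S

/-- The fork-convex hull: the smallest fork-convex set containing `𝔓`. -/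
def fconv (Γ : Measure (Seq d)) (𝔓 : Set (Measure (Seq d))) : Set (Measure (Seq d)) :=
  ⋂₀ {S | 𝔓 ⊆ S ∧ IsForkConvex d Γ S}

/-- Convergence of sequential laws: the density processes converge in `L¹(Γ)` at every fixed time. -/
def TendstoLocL1 (Γ : Measure (Seq d)) (Pn : ℕ → Measure (Seq d)) (P : Measure (Seq d)) : Prop :=
  ∀ t, Tendsto (fun n => ∫ ω, |Z d (Pn n) Γ t ω - Z d P Γ t ω| ∂Γ) atTop (nhds 0)

/-- The closed fork-convex hull: the closure of the fork-convex hull under local `L¹(Γ)`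
convergence of density processes. -/
def clfconv (Γ : Measure (Seq d)) (𝔓 : Set (Measure (Seq d))) : Set (Measure (Seq d)) :=
  {P | IsProbabilityMeasure P ∧ LocAC d P Γ ∧
    ∃ Pn : ℕ → Measure (Seq d), (∀ n, Pn n ∈ fconv d Γ 𝔓) ∧ TendstoLocL1 d Γ Pn P}

/-- `μ` is the law of an i.i.d. sequence with marginal `P`. -/
def IsIIDLaw (μ : Measure (Seq d)) (P : Measure (RV d)) : Prop :=
  IsProbabilityMeasure μ ∧
    ∀ (t : ℕ) (A : Fin t → Set (RV d)), (∀ s, MeasurableSet (A s)) →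
      prefixLaw d μ t (Set.univ.pi A) = ∏ s, P (A s)

/-- `μ` is the law of an independent sequence with marginals `Ps 0, Ps 1, …`. -/
def IsProductLaw (μ : Measure (Seq d)) (Ps : ℕ → Measure (RV d)) : Prop :=
  IsProbabilityMeasure μ ∧
    ∀ (t : ℕ) (A : Fin t → Set (RV d)), (∀ s, MeasurableSet (A s)) →
      prefixLaw d μ t (Set.univ.pi A) = ∏ s : Fin t, Ps s (A s)

/-- The set of i.i.d. sequential laws with marginals in `PP`. -/
def iidLaws (PP : Set (Measure (RV d))) : Set (Measure (Seq d)) :=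
  {μ | ∃ P ∈ PP, IsIIDLaw d μ P}

/-- The set of independent-product sequential laws with all marginals in `PP`. -/
def productLaws (PP : Set (Measure (RV d))) : Set (Measure (Seq d)) :=
  {μ | ∃ Ps : ℕ → Measure (RV d), (∀ t, Ps t ∈ PP) ∧ IsProductLaw d μ Ps}




/-- The density of the `d`-dimensional Gaussian with mean `m` and covariance matrix `S`. -/
def gaussDensityFn (m : RV d) (S : Matrix (Fin d) (Fin d) ℝ) (x : RV d) : ℝ :=
  (2 * Real.pi) ^ (-(d : ℝ) / 2) * S.det ^ (-(1 : ℝ) / 2) *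
    Real.exp (-(1 / 2) * ((x - m) ⬝ᵥ (S⁻¹ *ᵥ (x - m))))

/-- A finite mixture of nondegenerate Gaussian densities. -/
def IsGaussianMixture (g : RV d → ℝ) : Prop :=
  ∃ (k : ℕ) (α : Fin k → ℝ) (ms : Fin k → RV d) (Ss : Fin k → Matrix (Fin d) (Fin d) ℝ),
    (∀ i, 0 ≤ α i) ∧ (∑ i, α i = 1) ∧ (∀ i, (Ss i).PosDef) ∧
    g = fun x => ∑ i, α i * gaussDensityFn d (ms i) (Ss i) x

/-- A log-concave nonnegative function on `ℝ^d`. -/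
def IsLogConcaveFn (p : RV d → ℝ) : Prop :=
  (∀ x, 0 ≤ p x) ∧
    ∀ (x y : RV d) (l : ℝ), 0 ≤ l → l ≤ 1 →
      p x ^ l * p y ^ (1 - l) ≤ p (l • x + (1 - l) • y)

/-- A log-concave probability density on `ℝ^d`. -/
def IsLogConcaveDensity (p : RV d → ℝ) : Prop :=
  Measurable p ∧ IsLogConcaveFn d p ∧ ∫ x, p x = 1

/-- The set `𝓛` of laws on `ℝ^d` with a log-concave Lebesgue density. -/
def logConcaveLaws : Set (Measure (RV d)) :=
  {P | IsProbabilityMeasure P ∧ ∃ p : RV d → ℝ, Measurable p ∧ IsLogConcaveFn d p ∧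
    P = volume.withDensity fun x => ENNReal.ofReal (p x)}

/-- The set `𝒢` of nondegenerate Gaussian laws on `ℝ^d`. -/
def gaussianLaws : Set (Measure (RV d)) :=
  {P | ∃ (m : RV d) (S : Matrix (Fin d) (Fin d) ℝ), S.PosDef ∧
    P = volume.withDensity fun x => ENNReal.ofReal (gaussDensityFn d m S x)}

/-- An estimator sequence: a measurable family of (strictly positive) predictable
probability density estimates. -/
def IsEstimatorSeq (E : (t : ℕ) → (Fin t → RV d) → RV d → ℝ) : Prop :=
  (∀ t, Measurable fun q : (Fin t → RV d) × RV d => E t q.1 q.2) ∧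
  (∀ t h x, 0 < E t h x) ∧ (∀ t h, ∫ x, E t h x = 1)

/-- The universal likelihood ratio (ULR) process. Time `t` corresponds to having observed
the `t` samples `ω 0, …, ω (t-1)`. -/
def ULR (E : (t : ℕ) → (Fin t → RV d) → RV d → ℝ) (t : ℕ) (ω : Seq d) : ℝ :=
  if t ≤ d then 1 else
    (∏ j ∈ Finset.Ico d t, E j (fun i : Fin j => ω i) (ω j)) /
      ⨆ p : {p : RV d → ℝ // IsLogConcaveDensity d p}, ∏ j ∈ Finset.Ico d t, p.1 (ω j)

/-- The prediction (cumulative log-loss) regret of the estimator sequence `E` relative to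
the density of `P`. -/
def regret (P : Measure (RV d)) (E : (t : ℕ) → (Fin t → RV d) → RV d → ℝ)
    (t : ℕ) (ω : Seq d) : ℝ :=
  ∑ j ∈ Finset.range t,
    (Real.log ((P.rnDeriv volume (ω j)).toReal) - Real.log (E j (fun i : Fin j => ω i) (ω j)))

/-- The Hellinger distance between two laws on `ℝ^d` (via their Lebesgue densities). -/
def hellinger (P Q : Measure (RV d)) : ℝ :=
  Real.sqrt ((1 / 2) *
    ∫ x, (Real.sqrt ((P.rnDeriv volume x).toReal) - Real.sqrt ((Q.rnDeriv volume x).toReal)) ^ 2)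

/-- The Hellinger distance from `P` to the class of log-concave laws. -/
def dHLC (P : Measure (RV d)) : ℝ :=
  sInf {r | ∃ L ∈ logConcaveLaws d, r = hellinger d P L}

/-- The Kullback–Leibler divergence. -/
def klDivR {α : Type*} [MeasurableSpace α] (P Q : Measure α) : EReal :=
  if P ≪ Q ∧ Integrable (fun x => Real.log ((P.rnDeriv Q x).toReal)) P
  then ((∫ x, Real.log ((P.rnDeriv Q x).toReal) ∂P : ℝ) : EReal) else ⊤

/-- Membership in `𝒟₁`. -/
def MemD1 (P : Measure (RV d)) : Prop :=
  IsProbabilityMeasure P ∧ P ≪ volume ∧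
  Integrable (fun x => max 0 (Real.log ((P.rnDeriv volume x).toReal))) P ∧
  Integrable (fun x => Real.sqrt (∑ i, (x i) ^ 2)) P

/-- The log-likelihood gap `σ_t(P)` between the true density and the log-concave maximum
likelihood. -/
def sigmaT (P : Measure (RV d)) (t : ℕ) (ω : Seq d) : ℝ :=
  (∑ j ∈ Finset.range t, Real.log ((P.rnDeriv volume (ω j)).toReal)) -
    ⨆ p : {p : RV d → ℝ // IsLogConcaveDensity d p},
      ∑ j ∈ Finset.range t, Real.log (p.1 (ω j))

/-- The mean vector of `P`. -/
def meanVec (P : Measure (RV d)) : RV d := fun i => ∫ x, x i ∂P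

/-- `Δ_P = min_{‖v‖=1} E_P |⟨v, X − E_P X⟩|`. -/
def DeltaP (P : Measure (RV d)) : ℝ :=
  sInf {r | ∃ v : RV d, (∑ i, (v i) ^ 2) = 1 ∧
    r = ∫ x, |∑ i, v i * (x i - meanVec d P i)| ∂P}

/-- The class `𝒟_{Box,Lip,B}`: laws with a `1`-Lipschitz density supported on `[-1,1]^d`
taking values in `[1/B, B]` there. -/
def DBoxLip (B : ℝ) : Set (Measure (RV d)) :=
  {P | IsProbabilityMeasure P ∧ ∃ p : RV d → ℝ, Measurable p ∧
    P = volume.withDensity (fun x => ENNReal.ofReal (p x)) ∧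
    (∀ x, ¬ (∀ i, |x i| ≤ 1) → p x = 0) ∧
    (∀ x, (∀ i, |x i| ≤ 1) → 1 / B ≤ p x ∧ p x ≤ B) ∧
    (∀ x y, (∀ i, |x i| ≤ 1) → (∀ i, |y i| ≤ 1) →
      |p x - p y| ≤ Real.sqrt (∑ i, (x i - y i) ^ 2))}

section

variable {d}



/-- A convex set meeting every closed orthant with apex `z` contains `z`. -/
theorem mem_of_forall_orthant {A : Set (RV d)} (hA : Convex ℝ A) (z : RV d)
    (h : ∀ s : Fin d → Bool, ∃ a ∈ A, ∀ i, if s i then z i ≤ a i else a i ≤ z i) : z ∈ A := by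
  choose a haA ha using h
  by_contra hz
  have hsub : convexHull ℝ (Set.range a) ⊆ A :=
    convexHull_min (Set.range_subset_iff.2 haA) hA
  have hclosed : IsClosed (convexHull ℝ (Set.range a)) :=
    ((Set.finite_range a).isCompact_convexHull ℝ).isClosed
  obtain ⟨f, u, hfz, hfu⟩ := geometric_hahn_banach_point_closed (convex_convexHull ℝ _) hclosed
    (fun hmem => hz (hsub hmem))
  let s : Fin d → Bool := fun i => decide (f (Pi.single i 1) ≤ 0)
  have h1 := hfu (a s) (subset_convexHull ℝ _ ⟨s, rfl⟩)
  have hexp : ∀ y : RV d, f y = ∑ i, y i * f (Pi.single i 1) := fun y => by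
    conv_lhs => rw [pi_eq_sum_univ' y]
    rw [map_sum]
    refine Finset.sum_congr rfl fun i _ => ?_
    rw [map_smul]
    simp [Pi.single]
  have h2 : f (a s) ≤ f z := by
    rw [hexp, hexp]
    refine Finset.sum_le_sum fun i _ => ?_
    have := ha s i
    by_cases hi : f (Pi.single i 1) ≤ 0
    · simp only [s, hi, decide_true, if_true] at this
      exact mul_le_mul_of_nonpos_right this hi
    · simp only [s, hi, decide_false, Bool.false_eq_true, if_false] at this
      exact mul_le_mul_of_nonneg_right this (not_le.1 hi).le
  linarith

/-- The cube `[-1,1]^d`. -/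
def box (d : ℕ) : Set (RV d) := {x | ∀ i, |x i| ≤ 1}

/-- The index of the grid cell of side `2 / (m + 1)` containing a point of the box. -/
def cell (m : ℕ) (x : RV d) : Fin d → Fin (m + 1) :=
  fun i => ⟨min ⌊(x i + 1) / 2 * (m + 1 : ℝ)⌋₊ m, by omega⟩

theorem lt_of_cell_lt {m : ℕ} {x y : RV d} {i : Fin d} (h : cell m x i < cell m y i) :
    x i < y i := by
  by_contra hle
  have h0 : (y i + 1) / 2 * (m + 1 : ℝ) ≤ (x i + 1) / 2 * (m + 1 : ℝ) := by
    have : (0 : ℝ) ≤ m + 1 := by positivity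
    gcongr
    exact not_lt.1 hle
  have h1 := Nat.floor_le_floor h0
  simp only [cell, Fin.lt_def] at h
  omega

theorem cell_bounds {x : RV d} (m : ℕ) (hx : x ∈ box d) (i : Fin d) :
    ((cell m x i : ℕ) : ℝ) ≤ (x i + 1) / 2 * (m + 1 : ℝ) ∧
      (x i + 1) / 2 * (m + 1 : ℝ) ≤ ((cell m x i : ℕ) : ℝ) + 1 := by
  have hxi := abs_le.1 (hx i)
  have hm : (0 : ℝ) < m + 1 := by positivity
  have h0 : 0 ≤ (x i + 1) / 2 * (m + 1 : ℝ) := mul_nonneg (by linarith) hm.le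
  have h1 : (x i + 1) / 2 * (m + 1 : ℝ) ≤ m + 1 := by nlinarith
  have h2 := Nat.floor_le h0
  have h3 := Nat.lt_floor_add_one ((x i + 1) / 2 * (m + 1 : ℝ))
  simp only [cell]
  rcases le_total ⌊(x i + 1) / 2 * (m + 1 : ℝ)⌋₊ m with hle | hle
  · rw [min_eq_left hle]
    exact ⟨h2, h3.le⟩
  · rw [min_eq_right hle]
    exact ⟨le_trans (by exact_mod_cast hle) h2, h1⟩

theorem abs_sub_le_of_cell_eq {m : ℕ} {x y : RV d} (hx : x ∈ box d) (hy : y ∈ box d) {i : Fin d}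
    (h : cell m x i = cell m y i) : |x i - y i| ≤ 2 / (m + 1 : ℝ) := by
  have hX := cell_bounds m hx i
  have hY := cell_bounds m hy i
  rw [h] at hX
  have hm : (0 : ℝ) < m + 1 := by positivity
  rw [le_div_iff₀ hm, ← abs_of_pos hm, ← abs_mul, abs_le]
  constructor <;> nlinarith

theorem measurable_cell (m : ℕ) : Measurable (cell m : RV d → _) := by
  refine measurable_pi_lambda _ fun i => ?_
  have : Measurable fun x : RV d => ⌊(x i + 1) / 2 * (m + 1 : ℝ)⌋₊ :=
    Nat.measurable_floor.comp (by fun_prop)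
  exact (measurable_from_top (f := fun k : ℕ => (⟨min k m, by omega⟩ : Fin (m + 1)))).comp this

/-- The cells meeting both a set and its complement. -/
def boundaryCells (m : ℕ) (A : Set (RV d)) : Finset (Fin d → Fin (m + 1)) :=
  {c | (∃ a ∈ A, cell m a = c) ∧ ∃ z ∉ A, cell m z = c}

theorem card_boundaryCells_mul_le (m : ℕ) {A : Set (RV d)} (hA : Convex ℝ A) :
    (boundaryCells m A).card * (m + 1) ≤ 6 ^ d * (m + 1) ^ d := by
  let D : (Fin d → Bool) → Finset (Fin d → Fin (m + 1)) := fun s =>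
    {c | (∃ a ∈ A, cell m a = c) ∧
      ∃ z, cell m z = c ∧ ∀ a ∈ A, ¬ ∀ i, if s i then z i ≤ a i else a i ≤ z i}
  have hsub : boundaryCells m A ⊆ Finset.univ.biUnion D := by
    intro c hc
    simp only [boundaryCells, Finset.mem_filter, Finset.mem_univ, true_and] at hc
    obtain ⟨hmeet, z, hz, hzc⟩ := hc
    by_contra hcon
    refine hz (mem_of_forall_orthant hA z fun s => ?_)
    by_contra hs
    push Not at hs
    refine hcon (Finset.mem_biUnion.2 ⟨s, Finset.mem_univ _, ?_⟩)
    simp only [D, Finset.mem_filter, Finset.mem_univ, true_and]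
    refine ⟨hmeet, z, hzc, fun a ha hall => ?_⟩
    obtain ⟨i, hi⟩ := hs a ha
    exact hi (hall i)
  have hD : ∀ s, (D s).card * (m + 1) ≤ (3 * (m + 1)) ^ d := by
    intro s
    let φ : (Fin d → Fin (m + 1)) × Fin (m + 1) → (Fin d → Fin (3 * (m + 1))) := fun q i =>
      if s i then ⟨m + q.1 i + q.2, by omega⟩ else ⟨m + q.1 i - q.2, by omega⟩
    have hval : ∀ q i, ((φ q i : ℕ) : ℤ) =
        if s i then (m : ℤ) + (q.1 i : ℕ) + (q.2 : ℕ) else (m : ℤ) + (q.1 i : ℕ) - (q.2 : ℕ) := by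
      intro q i
      by_cases hs : s i
      · simp [φ, hs]
      · have := q.2.isLt
        simp only [φ, hs, Bool.false_eq_true, if_false]
        omega
    have hkey : ∀ c ∈ D s, ∀ c' ∈ D s, ∀ k k' : Fin (m + 1), φ (c, k) = φ (c', k') → ¬ k' < k := by
      intro c hc c' hc' k k' hφ hk
      simp only [D, Finset.mem_filter, Finset.mem_univ, true_and] at hc hc'
      obtain ⟨-, z, rfl, hz⟩ := hc
      obtain ⟨⟨a, ha, rfl⟩, -⟩ := hc'
      refine hz a ha fun i => ?_
      have h1 := hval (cell m z, k) i
      rw [hφ, hval] at h1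
      by_cases hs : s i
      · simp only [hs, if_true] at h1 ⊢
        refine (lt_of_cell_lt (m := m) ?_).le
        rw [Fin.lt_def] at hk ⊢
        omega
      · simp only [hs, Bool.false_eq_true, if_false] at h1 ⊢
        refine (lt_of_cell_lt (m := m) ?_).le
        rw [Fin.lt_def] at hk ⊢
        omega
    have hinj : Set.InjOn φ ((D s ×ˢ (Finset.univ : Finset (Fin (m + 1)))) : Finset _) := by
      rintro ⟨c, k⟩ hq ⟨c', k'⟩ hq' hφ
      simp only [Finset.coe_product, Set.mem_prod, Finset.mem_coe, and_true, Finset.coe_univ,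
        Set.mem_univ] at hq hq'
      have hk : k = k' := le_antisymm (not_lt.1 (hkey c hq c' hq' k k' hφ))
        (not_lt.1 (hkey c' hq' c hq k' k hφ.symm))
      subst hk
      refine Prod.ext (funext fun i => ?_) rfl
      have h1 := hval (c, k) i
      rw [hφ, hval] at h1
      apply Fin.ext
      by_cases hs : s i
      · simp only [hs, if_true] at h1; simp only; omega
      · simp only [hs, Bool.false_eq_true, if_false] at h1; simp only; omega
    have := Finset.card_le_card_of_injOn φ (fun _ _ => Finset.mem_univ _) hinj
    simpa [Finset.card_product] using this
  calc (boundaryCells m A).card * (m + 1)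
      ≤ (∑ s : Fin d → Bool, (D s).card) * (m + 1) := by
        gcongr
        exact (Finset.card_le_card hsub).trans Finset.card_biUnion_le
    _ = ∑ s : Fin d → Bool, (D s).card * (m + 1) := Finset.sum_mul _ _ _
    _ ≤ ∑ _s : Fin d → Bool, (3 * (m + 1)) ^ d := Finset.sum_le_sum fun s _ => hD s
    _ = 6 ^ d * (m + 1) ^ d := by
        simp only [Finset.sum_const, Finset.card_univ, Fintype.card_pi, Fintype.card_bool,
          Finset.prod_const, Fintype.card_fin, smul_eq_mul]
        rw [mul_pow, ← mul_assoc, ← mul_pow]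
        norm_num

theorem volume_box_inter_cell_le (m : ℕ) (c : Fin d → Fin (m + 1)) :
    volume (box d ∩ cell m ⁻¹' {c}) ≤ ENNReal.ofReal ((2 / (m + 1 : ℝ)) ^ d) := by
  have hm : (0 : ℝ) < m + 1 := by positivity
  have hsub : box d ∩ cell m ⁻¹' {c} ⊆ Set.Icc (fun i => -1 + 2 * ((c i : ℕ) : ℝ) / (m + 1 : ℝ))
      (fun i => -1 + 2 * (((c i : ℕ) : ℝ) + 1) / (m + 1 : ℝ)) := by
    rintro x ⟨hx, rfl⟩
    refine ⟨fun i => ?_, fun i => ?_⟩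
    · have h := (cell_bounds m hx i).1
      have : 2 * ((cell m x i : ℕ) : ℝ) / (m + 1 : ℝ) ≤ x i + 1 := by
        rw [div_le_iff₀ hm]; linarith
      simp only
      linarith
    · have h := (cell_bounds m hx i).2
      have : x i + 1 ≤ 2 * (((cell m x i : ℕ) : ℝ) + 1) / (m + 1 : ℝ) := by
        rw [le_div_iff₀ hm]; linarith
      simp only
      linarith
  refine (measure_mono hsub).trans ?_
  rw [Real.volume_Icc_pi, ENNReal.ofReal_pow (by positivity)]
  refine le_of_eq ?_
  rw [Finset.prod_congr rfl fun i _ => ?_, Finset.prod_const, Finset.card_univ, Fintype.card_fin]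
  congr 1
  field_simp
  ring

theorem measurableSet_box : MeasurableSet (box d) := by
  have : box d = ⋂ i, {x : RV d | |x i| ≤ 1} := by
    ext x
    simp [box]
  rw [this]
  exact MeasurableSet.iInter fun i =>
    measurableSet_le (by fun_prop : Measurable fun x : RV d => |x i|) measurable_const

theorem setLIntegral_box_cell_le (m : ℕ) {e : (Fin d → Fin (m + 1)) → ℝ} (he : ∀ c, 0 ≤ e c) :
    ∫⁻ x in box d, ENNReal.ofReal (e (cell m x)) ≤
      ENNReal.ofReal ((2 / (m + 1 : ℝ)) ^ d * ∑ c, e c) := by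
  rw [← lintegral_map (μ := volume.restrict (box d)) (g := cell m)
    (f := fun c => ENNReal.ofReal (e c)) (measurable_of_countable _) (measurable_cell m),
    lintegral_fintype, Finset.mul_sum, ENNReal.ofReal_sum_of_nonneg
      (fun c _ => mul_nonneg (by positivity) (he c))]
  refine Finset.sum_le_sum fun c _ => ?_
  rw [mul_comm, ENNReal.ofReal_mul (by positivity), Measure.map_apply (measurable_cell m)
    (measurableSet_singleton c), Measure.restrict_apply
      (measurable_cell m (measurableSet_singleton c)), Set.inter_comm]
  gcongr
  exact volume_box_inter_cell_le m c

/-- Grid functions with `m + 2` values bracket a quasiconcave function from above. -/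
theorem exists_bracket (m : ℕ) {g : RV d → ℝ} (hg0 : ∀ x, 0 ≤ g x)
    (hg : ∀ s, Convex ℝ {x | s ≤ g x}) {G : ℝ} (hG : 0 < G) :
    ∃ (U : (Fin d → Fin (m + 1)) → Fin (m + 2)) (e : (Fin d → Fin (m + 1)) → ℝ),
      (∀ x, g x ≤ G → g x ≤ G / (m + 1) * ((U (cell m x) : ℕ) + 1)) ∧ (∀ c, 0 ≤ e c) ∧
      (∀ x, G / (m + 1) * ((U (cell m x) : ℕ) + 1) ≤ g x + e (cell m x)) ∧
      ∑ c, e c ≤ G * (1 + 6 ^ d) * (m + 1) ^ d / (m + 1) := by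
  have hm : (0 : ℝ) < m + 1 := by positivity
  let A : ℕ → Set (RV d) := fun k => {x | ((k : ℝ) + 1) * (G / (m + 1)) ≤ g x}
  let S : (Fin d → Fin (m + 1)) → Finset ℕ := fun c =>
    {k ∈ Finset.range (m + 1) | ∃ a ∈ A k, cell m a = c}
  let N : (Fin d → Fin (m + 1)) → Finset ℕ := fun c =>
    {k ∈ Finset.range (m + 1) | c ∈ boundaryCells m (A k)}
  have hη : 0 < G / (m + 1) := by positivity
  have hS : ∀ c, (S c).card < m + 2 := fun c => by
    have := Finset.card_filter_le (Finset.range (m + 1)) (fun k => ∃ a ∈ A k, cell m a = c)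
    simp only [Finset.card_range] at this
    exact Nat.lt_succ_of_le this
  refine ⟨fun c => ⟨(S c).card, hS c⟩, fun c => G / (m + 1) * (1 + (N c).card), ?_, ?_, ?_, ?_⟩
  · intro x hx
    simp only
    set K := ⌊g x / (G / (m + 1))⌋₊ with hK
    have hK0 : (K : ℝ) ≤ g x / (G / (m + 1)) := Nat.floor_le (div_nonneg (hg0 x) hη.le)
    have hK1 : g x / (G / (m + 1)) < K + 1 := Nat.lt_floor_add_one _
    rw [le_div_iff₀ hη] at hK0
    rw [div_lt_iff₀ hη] at hK1
    have hKm : K ≤ m + 1 := by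
      have h1 : (K : ℝ) * (G / (m + 1)) ≤ (m + 1) * (G / (m + 1)) := by
        rw [mul_div_cancel₀ _ hm.ne']
        exact hK0.trans hx
      exact_mod_cast le_of_mul_le_mul_right h1 hη
    have hsub : Finset.range K ⊆ S (cell m x) := by
      intro k hk
      rw [Finset.mem_range] at hk
      refine Finset.mem_filter.2 ⟨Finset.mem_range.2 (by omega), x, ?_, rfl⟩
      have : (k : ℝ) + 1 ≤ K := by exact_mod_cast hk
      exact (mul_le_mul_of_nonneg_right this hη.le).trans hK0
    have hcard := Finset.card_le_card hsub
    rw [Finset.card_range] at hcard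
    have : (K : ℝ) ≤ (S (cell m x)).card := by exact_mod_cast hcard
    nlinarith
  · intro c
    positivity
  · intro x
    simp only
    set K := ⌊g x / (G / (m + 1))⌋₊ with hK
    have hK0 : (K : ℝ) ≤ g x / (G / (m + 1)) := Nat.floor_le (div_nonneg (hg0 x) hη.le)
    rw [le_div_iff₀ hη] at hK0
    have hsub : S (cell m x) ⊆ Finset.range K ∪ N (cell m x) := by
      intro k hk
      obtain ⟨hkm, hka⟩ := Finset.mem_filter.1 hk
      by_cases hxk : x ∈ A k
      · refine Finset.mem_union_left _ (Finset.mem_range.2 ?_)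
        rw [← Nat.succ_le_iff, hK]
        refine Nat.le_floor ?_
        rw [le_div_iff₀ hη]
        push_cast
        exact hxk
      · refine Finset.mem_union_right _ (Finset.mem_filter.2 ⟨hkm, ?_⟩)
        simp only [boundaryCells, Finset.mem_filter, Finset.mem_univ, true_and]
        exact ⟨hka, x, hxk, rfl⟩
    have hcard := (Finset.card_le_card hsub).trans (Finset.card_union_le _ _)
    rw [Finset.card_range] at hcard
    have : ((S (cell m x)).card : ℝ) ≤ K + (N (cell m x)).card := by exact_mod_cast hcard
    nlinarith
  · have hN : ∑ c, (N c).card = ∑ k ∈ Finset.range (m + 1), (boundaryCells m (A k)).card := by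
      simp only [N, Finset.card_filter]
      rw [Finset.sum_comm]
      refine Finset.sum_congr rfl fun k _ => ?_
      rw [← Finset.card_filter]
      congr 1
      ext c
      simp
    have hN' : ∑ c, (N c).card ≤ 6 ^ d * (m + 1) ^ d := by
      refine Nat.le_of_mul_le_mul_right (c := m + 1) ?_ (Nat.succ_pos m)
      rw [hN, Finset.sum_mul]
      calc ∑ k ∈ Finset.range (m + 1), (boundaryCells m (A k)).card * (m + 1)
          ≤ ∑ _k ∈ Finset.range (m + 1), 6 ^ d * (m + 1) ^ d :=
            Finset.sum_le_sum fun k _ => card_boundaryCells_mul_le m (hg _)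
        _ = 6 ^ d * (m + 1) ^ d * (m + 1) := by
            rw [Finset.sum_const, Finset.card_range, smul_eq_mul, mul_comm]
    have hN'' : ∑ c, ((N c).card : ℝ) ≤ 6 ^ d * (m + 1) ^ d := by exact_mod_cast hN'
    rw [← Finset.mul_sum, Finset.sum_add_distrib]
    have hcells : ∑ _c : Fin d → Fin (m + 1), (1 : ℝ) = (m + 1) ^ d := by simp
    rw [hcells]
    calc G / (m + 1) * ((m + 1 : ℝ) ^ d + ∑ c, ((N c).card : ℝ))
        ≤ G / (m + 1) * ((m + 1 : ℝ) ^ d + 6 ^ d * (m + 1) ^ d) := by gcongr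
      _ = G * (1 + 6 ^ d) * (m + 1) ^ d / (m + 1) := by ring

/-- The affinity of a bracketing grid function with `p` exceeds that of the bracketed function
by at most a multiple of the mesh. -/
theorem exists_bracket_affinity (m : ℕ) {g p : RV d → ℝ} (hg0 : ∀ x, 0 ≤ g x)
    (hgm : Measurable g) (hpm : Measurable p)
    (hg : ∀ s, Convex ℝ {x | s ≤ g x}) {G B : ℝ} (hG : 0 < G)
    (hp0 : ∀ x ∉ box d, p x = 0) (hpB : ∀ x ∈ box d, p x ≤ B) :
    ∃ U : (Fin d → Fin (m + 1)) → Fin (m + 2),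
      (∀ x, g x ≤ G → g x ≤ G / (m + 1) * ((U (cell m x) : ℕ) + 1)) ∧
      ∫⁻ x, ENNReal.ofReal (√(p x) * (G / (m + 1) * ((U (cell m x) : ℕ) + 1))) ≤
        (∫⁻ x, ENNReal.ofReal (√(p x) * g x)) +
          ENNReal.ofReal (√B * (2 ^ d * G * (1 + 6 ^ d)) / (m + 1)) := by
  obtain ⟨U, e, hU, he, hUe, hsum⟩ := exists_bracket m hg0 hg hG
  have hm : (0 : ℝ) < m + 1 := by positivity
  refine ⟨U, hU, ?_⟩
  have hpt : ∀ x, ENNReal.ofReal (√(p x) * (G / (m + 1) * ((U (cell m x) : ℕ) + 1))) ≤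
      ENNReal.ofReal (√(p x) * g x) +
        (box d).indicator (fun x => ENNReal.ofReal √B * ENNReal.ofReal (e (cell m x))) x := by
    intro x
    by_cases hx : x ∈ box d
    · rw [Set.indicator_of_mem hx, ← ENNReal.ofReal_mul (Real.sqrt_nonneg _),
        ← ENNReal.ofReal_add (mul_nonneg (Real.sqrt_nonneg _) (hg0 x))
          (mul_nonneg (Real.sqrt_nonneg _) (he _))]
      refine ENNReal.ofReal_le_ofReal ?_
      calc √(p x) * (G / (m + 1) * ((U (cell m x) : ℕ) + 1))
          ≤ √(p x) * (g x + e (cell m x)) :=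
            mul_le_mul_of_nonneg_left (hUe x) (Real.sqrt_nonneg _)
        _ = √(p x) * g x + √(p x) * e (cell m x) := mul_add _ _ _
        _ ≤ _ := by
            gcongr
            · exact he _
            · exact hpB x hx
    · simp [hp0 x hx]
  refine (lintegral_mono hpt).trans ?_
  rw [lintegral_add_left (by fun_prop), lintegral_indicator measurableSet_box,
    lintegral_const_mul' _ _ ENNReal.ofReal_ne_top]
  gcongr
  calc ENNReal.ofReal √B * ∫⁻ x in box d, ENNReal.ofReal (e (cell m x))
      ≤ ENNReal.ofReal √B * ENNReal.ofReal ((2 / (m + 1 : ℝ)) ^ d *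
          (G * (1 + 6 ^ d) * (m + 1) ^ d / (m + 1))) := by
        gcongr
        refine (setLIntegral_box_cell_le m he).trans (ENNReal.ofReal_le_ofReal ?_)
        gcongr
    _ = ENNReal.ofReal (√B * (2 ^ d * G * (1 + 6 ^ d)) / (m + 1)) := by
        rw [← ENNReal.ofReal_mul (Real.sqrt_nonneg _)]
        congr 1
        rw [div_pow]
        field_simp

theorem IsLogConcaveFn.convex_superlevel {p : RV d → ℝ} (hp : IsLogConcaveFn d p) (s : ℝ) :
    Convex ℝ {x | s ≤ p x} := by
  intro x hx y hy a b ha hb hab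
  obtain rfl : b = 1 - a := by linarith
  rcases le_or_gt s 0 with hs | hs
  · exact hs.trans (hp.1 _)
  · calc s = s ^ a * s ^ (1 - a) := by
          rw [← Real.rpow_add hs, add_sub_cancel, Real.rpow_one]
      _ ≤ p x ^ a * p y ^ (1 - a) := by
          gcongr
          · exact Real.rpow_nonneg (hp.1 x) _
          · exact hx
          · exact hy
      _ ≤ p (a • x + (1 - a) • y) := hp.2 x y a ha (by linarith)

theorem IsLogConcaveFn.convex_superlevel_sqrt {p : RV d → ℝ} (hp : IsLogConcaveFn d p) (s : ℝ) :
    Convex ℝ {x | s ≤ √(p x)} := by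
  rcases le_or_gt s 0 with hs | hs
  · convert convex_univ (𝕜 := ℝ) (E := RV d)
    ext x
    simpa using hs.trans (Real.sqrt_nonneg _)
  · convert hp.convex_superlevel (s ^ 2) using 3 with x
    exact Real.le_sqrt' hs

theorem IsLogConcaveDensity.integrable {p : RV d → ℝ} (hp : IsLogConcaveDensity d p) :
    Integrable p := by
  by_contra h
  have := hp.2.2
  rw [integral_undef h] at this
  exact zero_ne_one this

theorem IsLogConcaveDensity.lintegral_eq_one {p : RV d → ℝ} (hp : IsLogConcaveDensity d p) :
    ∫⁻ x, ENNReal.ofReal (p x) = 1 := by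
  rw [← ofReal_integral_eq_lintegral_ofReal hp.integrable (.of_forall hp.2.1.1), hp.2.2,
    ENNReal.ofReal_one]

theorem exists_forall_mul_pow_lt_exp (d : ℕ) (K L : ℝ) :
    ∃ v₀, 1 ≤ v₀ ∧ L ≤ v₀ ∧ ∀ v ≥ v₀, (K * v) ^ d < Real.exp (v - 1) := by
  have h : Tendsto (fun v : ℝ => (K ^ d * Real.exp 1) * (v ^ d * Real.exp (-v))) atTop (nhds 0) := by
    simpa using (Real.tendsto_pow_mul_exp_neg_atTop_nhds_zero d).const_mul (K ^ d * Real.exp 1)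
  obtain ⟨v₁, hv₁⟩ := Filter.eventually_atTop.1 (h.eventually (gt_mem_nhds zero_lt_one))
  refine ⟨max 1 (max L v₁), le_max_left _ _, (le_max_left _ _).trans (le_max_right _ _),
    fun v hv => ?_⟩
  have h1 := hv₁ v (((le_max_right _ _).trans (le_max_right _ _)).trans hv)
  rw [Real.exp_neg, ← mul_assoc, ← div_eq_mul_inv, div_lt_one (Real.exp_pos _)] at h1
  rw [mul_pow, Real.exp_sub, lt_div_iff₀ (Real.exp_pos _)]
  linarith

/-- The region `±x_i ≥ 1/2`, with the signs prescribed by `s`. -/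
def corner (s : Fin d → Bool) : Set (RV d) := {x | ∀ i, if s i then 1 / 2 ≤ x i else x i ≤ -(1 / 2)}

/-- A log-concave density with a large value is exponentially small on some corner region. -/
theorem IsLogConcaveDensity.exists_corner_lt {p : RV d → ℝ} (hp : IsLogConcaveDensity d p)
    {y : RV d} {v K : ℝ} (hv : 1 ≤ v) (hK : 1 ≤ K) (hy : p y = Real.exp v)
    (hlt : (K * v) ^ d < Real.exp (v - 1)) :
    ∃ s, ∀ x ∈ corner s, p x < Real.exp (v - K * v) := by
  by_contra! hcon
  set r := K * v with hr
  have hr1 : 1 ≤ r := by nlinarith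
  have hr0 : 0 < r := by linarith
  let Q : Set (RV d) := Set.Icc (fun _ => -(1 / 2)) (fun _ => 1 / 2)
  have hQ : ∀ x ∈ Q, Real.exp (v - r) ≤ p x := by
    intro x hx
    refine mem_of_forall_orthant (hp.2.1.convex_superlevel (Real.exp (v - r))) x fun s => ?_
    obtain ⟨a, ha, hpa⟩ := hcon s
    refine ⟨a, hpa, fun i => ?_⟩
    have h1 := ha i
    have h2 := hx.1 i
    have h3 := hx.2 i
    simp only at h2 h3
    split_ifs at h1 ⊢ <;> linarith
  have hH : ∀ x ∈ AffineMap.homothety y (1 / r) '' Q, Real.exp (v - 1) ≤ p x := by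
    rintro _ ⟨x, hx, rfl⟩
    have h1 := hp.2.1.2 x y (1 / r) (by positivity) (by rw [div_le_one hr0]; exact hr1)
    have h2 : AffineMap.homothety y (1 / r) x = (1 / r) • x + (1 - 1 / r) • y := by
      rw [AffineMap.homothety_apply, vsub_eq_sub, vadd_eq_add, smul_sub, sub_smul, one_smul]
      abel
    rw [h2]
    refine le_trans ?_ h1
    calc Real.exp (v - 1) = Real.exp (v - r) ^ (1 / r) * Real.exp v ^ (1 - 1 / r) := by
          rw [← Real.exp_mul, ← Real.exp_mul, ← Real.exp_add]
          congr 1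
          field_simp
          ring
      _ ≤ _ := by
          rw [hy]
          gcongr
          exact hQ x hx
  have hvol : volume (AffineMap.homothety y (1 / r) '' Q) = ENNReal.ofReal ((1 / r) ^ d) := by
    rw [Measure.addHaar_image_homothety, Real.volume_Icc_pi]
    norm_num [abs_of_pos hr0]
  have h1 : ENNReal.ofReal (Real.exp (v - 1)) * ENNReal.ofReal ((1 / r) ^ d) ≤ 1 := by
    rw [← hvol, ← hp.lintegral_eq_one]
    refine le_trans ?_ (setLIntegral_le_lintegral (AffineMap.homothety y (1 / r) '' Q) _)
    rw [← setLIntegral_const]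
    exact setLIntegral_mono (by have := hp.1; fun_prop) fun x hx =>
      ENNReal.ofReal_le_ofReal (hH x hx)
  rw [← ENNReal.ofReal_mul (Real.exp_pos _).le, ENNReal.ofReal_le_one, one_div, inv_pow,
    ← div_eq_mul_inv, div_le_one (by positivity)] at h1
  linarith

/-- If every corner region carries a fixed proportion of the sample, then a log-concave density
with a large value at a sample point has small likelihood. -/
theorem IsLogConcaveDensity.prod_le_of_large {p : RV d → ℝ} (hp : IsLogConcaveDensity d p)
    {S : Finset ℕ} {X : ℕ → RV d} {c v₀ : ℝ} (hc0 : 0 < c) (hc1 : c ≤ 1) (hv₀ : 1 ≤ v₀)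
    (hlt : ∀ v ≥ v₀, (2 / c * v) ^ d < Real.exp (v - 1))
    (hcorner : ∀ s, c * S.card ≤ ∑ j ∈ S, (corner s).indicator 1 (X j))
    {j₀ : ℕ} (hj₀ : j₀ ∈ S) (hlarge : Real.exp v₀ < p (X j₀)) :
    ∏ j ∈ S, p (X j) ≤ Real.exp (-(v₀ * S.card)) := by
  obtain ⟨j₁, hj₁, hmax⟩ := Finset.exists_max_image S (fun j => p (X j)) ⟨j₀, hj₀⟩
  have hpos : 0 < p (X j₁) := (Real.exp_pos v₀).trans (hlarge.trans_le (hmax j₀ hj₀))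
  obtain ⟨v, hpv⟩ : ∃ v, p (X j₁) = Real.exp v := ⟨_, (Real.exp_log hpos).symm⟩
  have hvv : v₀ ≤ v := by
    rw [← Real.exp_le_exp, ← hpv]
    exact hlarge.le.trans (hmax j₀ hj₀)
  have hK : 1 ≤ 2 / c := by
    rw [le_div_iff₀ hc0]
    linarith
  obtain ⟨s, hs⟩ := hp.exists_corner_lt (hv₀.trans hvv) hK hpv (hlt v hvv)
  calc ∏ j ∈ S, p (X j)
      ≤ ∏ j ∈ S, Real.exp (v - 2 / c * v * (corner s).indicator 1 (X j)) := by
        refine Finset.prod_le_prod (fun j _ => hp.2.1.1 _) fun j hj => ?_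
        by_cases hj' : X j ∈ corner s
        · rw [Set.indicator_of_mem hj', Pi.one_apply, mul_one]
          exact (hs _ hj').le
        · rw [Set.indicator_of_notMem hj', mul_zero, sub_zero, ← hpv]
          exact hmax j hj
    _ = Real.exp (v * S.card - 2 / c * v * ∑ j ∈ S, (corner s).indicator 1 (X j)) := by
        rw [← Real.exp_sum, Finset.sum_sub_distrib, Finset.mul_sum, Finset.sum_const,
          nsmul_eq_mul, mul_comm v]
    _ ≤ Real.exp (-(v₀ * S.card)) := by
        rw [Real.exp_le_exp]
        have h1 : 2 / c * v * (c * S.card) ≤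
            2 / c * v * ∑ j ∈ S, (corner s).indicator 1 (X j) := by
          have : 0 ≤ 2 / c * v := mul_nonneg (by linarith) (by linarith)
          exact mul_le_mul_of_nonneg_left (hcorner s) this
        have h2 : 2 / c * v * (c * S.card) = 2 * v * S.card := by
          field_simp
        have h3 : v₀ * S.card ≤ v * S.card := by gcongr
        linarith

/-- The standard Gaussian density on `ℝ^d`. -/
def gaussPi (x : RV d) : ℝ := ∏ i, gaussianPDFReal 0 1 (x i)

theorem measurable_gaussPi : Measurable (gaussPi : RV d → ℝ) :=
  Finset.measurable_prod _ fun i _ => (measurable_gaussianPDFReal 0 1).comp (measurable_pi_apply i)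

theorem gaussPi_pos (x : RV d) : 0 < gaussPi x :=
  Finset.prod_pos fun _ _ => gaussianPDFReal_pos _ _ _ one_ne_zero

theorem gaussPi_le_one (x : RV d) : gaussPi x ≤ 1 := by
  refine Finset.prod_le_one (fun _ _ => gaussianPDFReal_nonneg _ _ _) fun i _ => ?_
  rw [gaussianPDFReal]
  refine mul_le_one₀ ?_ (Real.exp_pos _).le (Real.exp_le_one_iff.2 ?_)
  · refine inv_le_one_of_one_le₀ (Real.one_le_sqrt.2 ?_)
    have := Real.pi_gt_three
    simp only [NNReal.coe_one, mul_one]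
    linarith
  · rw [neg_div, neg_nonpos]
    positivity

theorem integral_gaussPi : ∫ x : RV d, gaussPi x = 1 := by
  unfold gaussPi
  rw [integral_fintype_prod_volume_eq_prod (f := fun _ : Fin d => gaussianPDFReal 0 1)]
  exact Finset.prod_eq_one fun _ _ => integral_gaussianPDFReal_eq_one 0 one_ne_zero

theorem gaussianPDFReal_rpow_mul_le (x y : ℝ) {l : ℝ} (h0 : 0 ≤ l) (h1 : l ≤ 1) :
    gaussianPDFReal 0 1 x ^ l * gaussianPDFReal 0 1 y ^ (1 - l) ≤
      gaussianPDFReal 0 1 (l * x + (1 - l) * y) := by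
  have hc : (0 : ℝ) < (√(2 * Real.pi * (1 : NNReal)))⁻¹ := by
    rw [NNReal.coe_one]
    positivity
  have hform : ∀ z, gaussianPDFReal 0 1 z =
      Real.exp (Real.log (√(2 * Real.pi * (1 : NNReal)))⁻¹ - z ^ 2 / 2) := by
    intro z
    rw [Real.exp_sub, Real.exp_log hc, gaussianPDFReal, neg_div, Real.exp_neg, ← div_eq_mul_inv]
    simp
  rw [hform, hform, hform, ← Real.exp_mul, ← Real.exp_mul, ← Real.exp_add, Real.exp_le_exp]
  nlinarith [mul_nonneg (mul_nonneg h0 (sub_nonneg.2 h1)) (sq_nonneg (x - y))]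

theorem isLogConcaveDensity_gaussPi : IsLogConcaveDensity d gaussPi := by
  refine ⟨measurable_gaussPi, ⟨fun x => (gaussPi_pos x).le, fun x y l h0 h1 => ?_⟩,
    integral_gaussPi⟩
  simp only [gaussPi]
  rw [← Real.finsetProd_rpow _ _ (fun _ _ => gaussianPDFReal_nonneg _ _ _),
    ← Real.finsetProd_rpow _ _ (fun _ _ => gaussianPDFReal_nonneg _ _ _),
    ← Finset.prod_mul_distrib]
  refine Finset.prod_le_prod (fun i _ => mul_nonneg
    (Real.rpow_nonneg (gaussianPDFReal_nonneg _ _ _) _)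
    (Real.rpow_nonneg (gaussianPDFReal_nonneg _ _ _) _)) fun i _ => ?_
  simpa using gaussianPDFReal_rpow_mul_le (x i) (y i) h0 h1

/-- `p` is a `1`-Lipschitz probability density on the box with values in `[1/B, B]`. -/
structure IsBoxLip (B : ℝ) (p : RV d → ℝ) : Prop where
  measurable : Measurable p
  eq_zero : ∀ x ∉ box d, p x = 0
  bounds : ∀ x ∈ box d, 1 / B ≤ p x ∧ p x ≤ B
  lipschitz : ∀ x ∈ box d, ∀ y ∈ box d, |p x - p y| ≤ √(∑ i, (x i - y i) ^ 2)
  lintegral_eq_one : ∫⁻ x, ENNReal.ofReal (p x) = 1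

theorem exists_isBoxLip_of_mem {B : ℝ} {P : Measure (RV d)} (hP : P ∈ DBoxLip d B) :
    ∃ p, IsBoxLip B p ∧ P = volume.withDensity fun x => ENNReal.ofReal (p x) := by
  obtain ⟨hprob, p, hm, rfl, h0, hb, hl⟩ := hP
  refine ⟨p, ⟨hm, h0, hb, fun x hx y hy => hl x y hx hy, ?_⟩, rfl⟩
  have := hprob.measure_univ
  rwa [withDensity_apply _ MeasurableSet.univ, Measure.restrict_univ] at this

namespace IsBoxLip

variable {B : ℝ} {p : RV d → ℝ}

theorem pos (hp : IsBoxLip B p) (hB : 0 < B) {x : RV d} (hx : x ∈ box d) : 0 < p x :=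
  lt_of_lt_of_le (by positivity) (hp.bounds x hx).1

theorem nonneg (hp : IsBoxLip B p) (hB : 0 < B) (x : RV d) : 0 ≤ p x := by
  by_cases hx : x ∈ box d
  · exact (hp.pos hB hx).le
  · rw [hp.eq_zero x hx]

theorem le_bound (hp : IsBoxLip B p) (hB : 0 < B) (x : RV d) : p x ≤ B := by
  by_cases hx : x ∈ box d
  · exact (hp.bounds x hx).2
  · rw [hp.eq_zero x hx]
    exact hB.le

theorem integrable (hp : IsBoxLip B p) (hB : 0 < B) : Integrable p := by
  refine ⟨hp.measurable.aestronglyMeasurable, ?_⟩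
  rw [hasFiniteIntegral_iff_ofReal (.of_forall (hp.nonneg hB)), hp.lintegral_eq_one]
  exact ENNReal.one_lt_top

theorem integral_eq_one (hp : IsBoxLip B p) (hB : 0 < B) : ∫ x, p x = 1 := by
  rw [integral_eq_lintegral_of_nonneg_ae (.of_forall (hp.nonneg hB))
    hp.measurable.aestronglyMeasurable, hp.lintegral_eq_one, ENNReal.toReal_one]

theorem integrable_sqrt_mul_sqrt (hp : IsBoxLip B p) (hB : 0 < B) {q : RV d → ℝ}
    (hq : IsLogConcaveDensity d q) : Integrable fun x => √(p x) * √(q x) := by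
  refine ((hp.integrable hB).add hq.integrable).mono'
    (hp.measurable.sqrt.mul hq.1.sqrt).aestronglyMeasurable (.of_forall fun x => ?_)
  rw [Real.norm_of_nonneg (by positivity), Pi.add_apply]
  nlinarith [sq_nonneg (√(p x) - √(q x)), Real.sq_sqrt (hp.nonneg hB x),
    Real.sq_sqrt (hq.2.1.1 x), hp.nonneg hB x, hq.2.1.1 x]

/-- The Hellinger affinity with a log-concave density is bounded in terms of the Hellinger
distance to the log-concave class. -/
theorem integral_sqrt_mul_sqrt_le (hp : IsBoxLip B p) (hB : 0 < B) {q : RV d → ℝ}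
    (hq : IsLogConcaveDensity d q) :
    ∫ x, √(p x) * √(q x) ≤
      1 - dHLC d (volume.withDensity fun x => ENNReal.ofReal (p x)) ^ 2 := by
  set P := (volume : Measure (RV d)).withDensity fun x => ENNReal.ofReal (p x) with hP
  set Q := (volume : Measure (RV d)).withDensity fun x => ENNReal.ofReal (q x) with hQ
  have hQmem : Q ∈ logConcaveLaws d := by
    refine ⟨⟨?_⟩, q, hq.1, hq.2.1, rfl⟩
    rw [hQ, withDensity_apply _ MeasurableSet.univ, Measure.restrict_univ, hq.lintegral_eq_one]
  have hinteg : ∫ x, (√((P.rnDeriv volume x).toReal) - √((Q.rnDeriv volume x).toReal)) ^ 2 =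
      ∫ x, (p x + q x - 2 * (√(p x) * √(q x))) := by
    refine integral_congr_ae ?_
    filter_upwards [Measure.rnDeriv_withDensity volume hp.measurable.ennreal_ofReal,
      Measure.rnDeriv_withDensity volume hq.1.ennreal_ofReal] with x h1 h2
    rw [hP, hQ, h1, h2, ENNReal.toReal_ofReal (hp.nonneg hB x),
      ENNReal.toReal_ofReal (hq.2.1.1 x), sub_sq, Real.sq_sqrt (hp.nonneg hB x),
      Real.sq_sqrt (hq.2.1.1 x)]
    ring
  have hval : ∫ x, (p x + q x - 2 * (√(p x) * √(q x))) =
      2 - 2 * ∫ x, √(p x) * √(q x) := by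
    rw [integral_sub (f := fun x => p x + q x) ((hp.integrable hB).add hq.integrable)
      ((hp.integrable_sqrt_mul_sqrt hB hq).const_mul 2),
      integral_add (hp.integrable hB) hq.integrable, hp.integral_eq_one hB, hq.2.2,
      integral_const_mul]
    norm_num
  have hle : dHLC d P ≤ hellinger d P Q :=
    csInf_le ⟨0, by rintro r ⟨L, -, rfl⟩; exact Real.sqrt_nonneg _⟩ ⟨Q, hQmem, rfl⟩
  have h0 : 0 ≤ dHLC d P :=
    Real.sInf_nonneg (by rintro r ⟨L, -, rfl⟩; exact Real.sqrt_nonneg _)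
  have hsq : hellinger d P Q ^ 2 = 1 - ∫ x, √(p x) * √(q x) := by
    rw [hellinger, Real.sq_sqrt (mul_nonneg (by norm_num) (integral_nonneg fun x => sq_nonneg _)),
      hinteg, hval]
    ring
  have := pow_le_pow_left₀ h0 hle 2
  linarith

theorem lintegral_sqrt_mul_sqrt_le (hp : IsBoxLip B p) (hB : 0 < B) {q : RV d → ℝ}
    (hq : IsLogConcaveDensity d q) :
    ∫⁻ x, ENNReal.ofReal (√(p x) * √(q x)) ≤ ENNReal.ofReal
      (1 - dHLC d (volume.withDensity fun x => ENNReal.ofReal (p x)) ^ 2) := by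
  rw [← ofReal_integral_eq_lintegral_ofReal (hp.integrable_sqrt_mul_sqrt hB hq)
    (.of_forall fun x => by positivity)]
  exact ENNReal.ofReal_le_ofReal (hp.integral_sqrt_mul_sqrt_le hB hq)

theorem dHLC_le_one (hp : IsBoxLip B p) (hB : 0 < B) :
    dHLC d (volume.withDensity fun x => ENNReal.ofReal (p x)) ≤ 1 := by
  have h := hp.integral_sqrt_mul_sqrt_le hB isLogConcaveDensity_gaussPi
  have h0 : 0 ≤ ∫ x, √(p x) * √(gaussPi x) := integral_nonneg fun x => by positivity
  nlinarith

end IsBoxLip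

section IID

variable {μ : Measure (Seq d)} {P : Measure (RV d)}

theorem IsIIDLaw.prefixLaw_eq_pi [IsProbabilityMeasure P] (h : IsIIDLaw d μ P) (t : ℕ) :
    prefixLaw d μ t = Measure.pi fun _ => P :=
  (Measure.pi_eq fun A hA => h.2 t A hA).symm

theorem measurable_prefixMap (t : ℕ) : Measurable (prefixMap d t) :=
  measurable_pi_lambda _ fun s => measurable_pi_apply (s : ℕ)

theorem IsIIDLaw.ae_coord [IsProbabilityMeasure P] (h : IsIIDLaw d μ P) {S : Set (RV d)}
    (hS : ∀ᵐ x ∂P, x ∈ S) : ∀ᵐ ω ∂μ, ∀ j, ω j ∈ S := by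
  refine ae_all_iff.2 fun j => ?_
  have h1 : ∀ᵐ z ∂prefixLaw d μ (j + 1), z (Fin.last j) ∈ S := by
    rw [h.prefixLaw_eq_pi]
    exact (measurePreserving_eval (fun _ : Fin (j + 1) => P)
      (Fin.last j)).quasiMeasurePreserving.ae hS
  exact ae_of_ae_map (measurable_prefixMap (j + 1)).aemeasurable h1

theorem IsIIDLaw.lintegral_prod [IsProbabilityMeasure P] (h : IsIIDLaw d μ P)
    {v : RV d → ENNReal} (hv : Measurable v) (t : ℕ) :
    ∫⁻ ω, ∏ j ∈ Finset.Ico d t, v (ω j) ∂μ = (∫⁻ x, v x ∂P) ^ (t - d) := by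
  let w : ℕ → RV d → ENNReal := fun j x => if d ≤ j then v x else 1
  have hw : ∀ j, Measurable (w j) := fun j => by
    by_cases hj : d ≤ j
    · simpa [w, hj] using hv
    · simp [w, hj]
  have h1 : ∀ ω : Seq d, ∏ j ∈ Finset.Ico d t, v (ω j) =
      ∏ i : Fin t, w i (prefixMap d t ω i) := by
    intro ω
    rw [Finset.prod_fin_eq_prod_range]
    have : Finset.Ico d t = (Finset.range t).filter (fun j => d ≤ j) := by
      ext j
      simp only [Finset.mem_Ico, Finset.mem_filter, Finset.mem_range]
      exact and_comm
    rw [this, Finset.prod_filter]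
    refine Finset.prod_congr rfl fun j hj => ?_
    simp [w, prefixMap, Finset.mem_range.1 hj]
  simp_rw [h1]
  rw [← lintegral_map (μ := μ) (g := prefixMap d t) (f := fun z : Fin t → RV d => ∏ i : Fin t, w i (z i))
    (Finset.measurable_prod _ fun i _ => (hw i).comp (measurable_pi_apply i))
    (measurable_prefixMap t)]
  change ∫⁻ z, _ ∂(prefixLaw d μ t) = _
  rw [h.prefixLaw_eq_pi, lintegral_prod_eq_prod_lintegral_of_indepFun _
    (fun (i : Fin t) (z : Fin t → RV d) => w i (z i))
    (iIndepFun_pi fun i => (hw i).aemeasurable)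
    fun i => (hw i).comp (measurable_pi_apply i)]
  have h2 : ∀ i : Fin t, ∫⁻ z : Fin t → RV d, w i (z i) ∂(Measure.pi fun _ => P) =
      if d ≤ (i : ℕ) then ∫⁻ x, v x ∂P else 1 := by
    intro i
    rw [(measurePreserving_eval (fun _ : Fin t => P) i).lintegral_comp (hw i)]
    by_cases hi : d ≤ (i : ℕ) <;> simp [w, hi]
  simp_rw [h2]
  rw [Finset.prod_fin_eq_prod_range]
  have : ∀ j ∈ Finset.range t, (if hj : j < t then
      (if d ≤ ((⟨j, hj⟩ : Fin t) : ℕ) then ∫⁻ x, v x ∂P else 1) else 1) =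
      if d ≤ j then ∫⁻ x, v x ∂P else 1 := by
    intro j hj
    simp [Finset.mem_range.1 hj]
  rw [Finset.prod_congr rfl this, ← Finset.prod_filter, Finset.prod_const]
  congr 1
  have : (Finset.range t).filter (fun j => d ≤ j) = Finset.Ico d t := by
    ext j
    simp only [Finset.mem_Ico, Finset.mem_filter, Finset.mem_range]
    exact and_comm
  rw [this, Nat.card_Ico]

/-- Chernoff bound for products over the sample. -/
theorem IsIIDLaw.measure_exp_le_prod_le [IsProbabilityMeasure P] (h : IsIIDLaw d μ P)
    {v : RV d → ℝ} (hv : Measurable v) (hv0 : ∀ x, 0 ≤ v x) {a b : ℝ}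
    (hb : ∫⁻ x, ENNReal.ofReal (v x) ∂P ≤ ENNReal.ofReal (Real.exp (-b))) (t : ℕ) :
    μ {ω | Real.exp (-(a * (t - d : ℕ))) ≤ ∏ j ∈ Finset.Ico d t, v (ω j)} ≤
      ENNReal.ofReal (Real.exp (-((b - a) * (t - d : ℕ)))) := by
  have hset : {ω : Seq d | Real.exp (-(a * (t - d : ℕ))) ≤ ∏ j ∈ Finset.Ico d t, v (ω j)} ⊆
      {ω | ENNReal.ofReal (Real.exp (-(a * (t - d : ℕ)))) ≤
        ∏ j ∈ Finset.Ico d t, ENNReal.ofReal (v (ω j))} := by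
    intro ω hω
    rw [Set.mem_ofPred_eq, ← ENNReal.ofReal_prod_of_nonneg fun j _ => hv0 _]
    exact ENNReal.ofReal_le_ofReal hω
  have hmeas : Measurable fun ω : Seq d => ∏ j ∈ Finset.Ico d t, ENNReal.ofReal (v (ω j)) :=
    Finset.measurable_prod _ fun j _ => (hv.comp (measurable_pi_apply j)).ennreal_ofReal
  refine (measure_mono hset).trans ((meas_ge_le_lintegral_div hmeas.aemeasurable
    (by simpa using Real.exp_pos _) ENNReal.ofReal_ne_top).trans ?_)
  rw [h.lintegral_prod hv.ennreal_ofReal]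
  calc (∫⁻ x, ENNReal.ofReal (v x) ∂P) ^ (t - d) / ENNReal.ofReal (Real.exp (-(a * (t - d : ℕ))))
      ≤ ENNReal.ofReal (Real.exp (-b)) ^ (t - d) /
          ENNReal.ofReal (Real.exp (-(a * (t - d : ℕ)))) := by gcongr
    _ = ENNReal.ofReal (Real.exp (-((b - a) * (t - d : ℕ)))) := by
        rw [← ENNReal.ofReal_pow (Real.exp_pos _).le, ← Real.exp_nat_mul,
          ← ENNReal.ofReal_div_of_pos (Real.exp_pos _), ← Real.exp_sub]
        congr 2
        ring

end IID

/-- The Bayesian mixture of countably many densities is an estimator sequence whose likelihood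
dominates that of each component up to its weight. -/
theorem exists_mixture_estimator {ι : Type*} [Countable ι] (w : ι → ENNReal) (hw : ∑' k, w k = 1)
    {f : ι → RV d → ℝ} (hfm : ∀ k, Measurable (f k)) (hf0 : ∀ k x, 0 < f k x) {b : ℝ}
    (hfb : ∀ k x, f k x ≤ b) (hf1 : ∀ k, ∫⁻ x, ENNReal.ofReal (f k x) = 1) :
    ∃ E : (t : ℕ) → (Fin t → RV d) → RV d → ℝ, IsEstimatorSeq d E ∧
      ∀ (k : ι) (t : ℕ) (ω : Seq d), d ≤ t →
        (w k).toReal * ∏ j ∈ Finset.Ico d t, f k (ω j) ≤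
          ∏ j ∈ Finset.Ico d t, E j (fun i : Fin j => ω i) (ω j) := by
  let A : ι → (j : ℕ) → (Fin j → RV d) → ENNReal := fun k j h =>
    ∏ i : Fin j, if d ≤ (i : ℕ) then ENNReal.ofReal (f k (h i)) else 1
  let W : (j : ℕ) → (Fin j → RV d) → ENNReal := fun j h => ∑' k, w k * A k j h
  let V : (j : ℕ) → (Fin j → RV d) → RV d → ENNReal := fun j h x =>
    ∑' k, w k * A k j h * ENNReal.ofReal (f k x)
  have hA0 : ∀ k j h, A k j h ≠ 0 := fun k j h => Finset.prod_ne_zero_iff.2 fun i _ => by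
    split_ifs
    · simpa using hf0 k (h i)
    · exact one_ne_zero
  have hAb : ∀ k j h, A k j h ≤ ENNReal.ofReal (max 1 b) ^ j := fun k j h => by
    refine (Finset.prod_le_prod' (g := fun _ => ENNReal.ofReal (max 1 b)) fun i _ => ?_).trans
      (by simp)
    split_ifs
    · exact ENNReal.ofReal_le_ofReal ((hfb _ _).trans (le_max_right _ _))
    · rw [← ENNReal.ofReal_one]
      exact ENNReal.ofReal_le_ofReal (le_max_left _ _)
  have hAm : ∀ k j, Measurable (A k j) := fun k j => Finset.measurable_prod _ fun i _ => by
    split_ifs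
    · exact ((hfm k).comp (measurable_pi_apply i)).ennreal_ofReal
    · exact measurable_const
  obtain ⟨k₀, hk₀⟩ : ∃ k, w k ≠ 0 := by
    by_contra! hcon
    simp [hcon] at hw
  have hW0 : ∀ j h, W j h ≠ 0 := fun j h hW =>
    (mul_ne_zero hk₀ (hA0 k₀ j h)) (ENNReal.tsum_eq_zero.1 hW k₀)
  have hV0 : ∀ j h x, V j h x ≠ 0 := fun j h x hV =>
    (mul_ne_zero (mul_ne_zero hk₀ (hA0 k₀ j h)) (by simpa using hf0 k₀ x))
      (ENNReal.tsum_eq_zero.1 hV k₀)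
  have hWb : ∀ j h, W j h ≤ ENNReal.ofReal (max 1 b) ^ j := fun j h => by
    calc W j h ≤ ∑' k, w k * ENNReal.ofReal (max 1 b) ^ j :=
          ENNReal.tsum_le_tsum fun k => by gcongr; exact hAb k j h
      _ = ENNReal.ofReal (max 1 b) ^ j := by rw [ENNReal.tsum_mul_right, hw, one_mul]
  have hWtop : ∀ j h, W j h ≠ ⊤ := fun j h =>
    ne_top_of_le_ne_top (ENNReal.pow_ne_top ENNReal.ofReal_ne_top) (hWb j h)
  have hVtop : ∀ j h x, V j h x ≠ ⊤ := fun j h x => by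
    refine ne_top_of_le_ne_top (ENNReal.mul_ne_top (hWtop j h)
      (ENNReal.ofReal_ne_top (r := b))) ?_
    rw [← ENNReal.tsum_mul_right]
    exact ENNReal.tsum_le_tsum fun k => by
      gcongr
      exact hfb k x
  have hWm : ∀ j, Measurable (W j) := fun j =>
    Measurable.tsum fun k => (hAm k j).const_mul _
  have hVm : ∀ j, Measurable fun q : (Fin j → RV d) × RV d => V j q.1 q.2 := fun j =>
    Measurable.tsum fun k => (((hAm k j).comp measurable_fst).const_mul _).mul
      ((hfm k).comp measurable_snd).ennreal_ofReal
  have hVint : ∀ j h, ∫⁻ x, V j h x = W j h := fun j h => by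
    rw [lintegral_tsum fun k => ((hfm k).ennreal_ofReal.const_mul _).aemeasurable]
    refine tsum_congr fun k => ?_
    rw [lintegral_const_mul _ (hfm k).ennreal_ofReal, hf1, mul_one]
  have hstep : ∀ (k : ι) (j : ℕ) (ω : Seq d), d ≤ j →
      A k (j + 1) (fun i => ω i) = A k j (fun i => ω i) * ENNReal.ofReal (f k (ω j)) := by
    intro k j ω hj
    simp only [A]
    rw [Fin.prod_univ_castSucc]
    simp [hj]
  have hAd : ∀ (k : ι) (h : Fin d → RV d), A k d h = 1 := fun k h =>
    Finset.prod_eq_one fun i _ => if_neg (not_le.2 i.isLt)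
  have hprodA : ∀ (k : ι) (t : ℕ) (ω : Seq d), d ≤ t → A k t (fun i => ω i) =
      ENNReal.ofReal (∏ j ∈ Finset.Ico d t, f k (ω j)) := by
    intro k t ω ht
    induction t, ht using Nat.le_induction with
    | base => simp [hAd]
    | succ j hj ih =>
      rw [hstep k j ω hj, ih, Finset.prod_Ico_succ_top hj,
        ENNReal.ofReal_mul (Finset.prod_nonneg fun i _ => (hf0 _ _).le)]
  have hprodE : ∀ (t : ℕ) (ω : Seq d), d ≤ t → ∏ j ∈ Finset.Ico d t,
      (V j (fun i : Fin j => ω i) (ω j) / W j (fun i : Fin j => ω i)).toReal =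
        (W t fun i : Fin t => ω i).toReal := by
    intro t ω ht
    induction t, ht using Nat.le_induction with
    | base => simp [W, hAd, hw]
    | succ j hj ih =>
      rw [Finset.prod_Ico_succ_top hj, ih, ← ENNReal.toReal_mul,
        ENNReal.mul_div_cancel (hW0 _ _) (hWtop _ _)]
      congr 1
      exact tsum_congr fun k => by rw [hstep k j ω hj, mul_assoc]
  have hle : ∀ (k : ι) (t : ℕ) (ω : Seq d), d ≤ t →
      w k * ENNReal.ofReal (∏ j ∈ Finset.Ico d t, f k (ω j)) ≤ W t fun i : Fin t => ω i := by
    intro k t ω ht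
    rw [← hprodA k t ω ht]
    exact ENNReal.le_tsum k
  have hVm' : ∀ j h, Measurable (V j h) := fun j h =>
    Measurable.tsum fun k => (hfm k).ennreal_ofReal.const_mul _
  clear_value V W
  refine ⟨fun j h x => (V j h x / W j h).toReal, ⟨fun j => ?_, fun j h x => ?_, fun j h => ?_⟩, ?_⟩
  · exact ((hVm j).div ((hWm j).comp measurable_fst)).ennreal_toReal
  · exact ENNReal.toReal_pos (ENNReal.div_ne_zero.2 ⟨hV0 j h x, hWtop j h⟩)
      (ENNReal.div_ne_top (hVtop j h x) (hW0 j h))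
  · rw [integral_toReal ((hVm' j h).div_const _).aemeasurable
      (.of_forall fun x => (ENNReal.div_ne_top (hVtop j h x) (hW0 j h)).lt_top)]
    simp_rw [div_eq_mul_inv]
    rw [lintegral_mul_const _ (hVm' j h), hVint, ENNReal.mul_inv_cancel (hW0 j h) (hWtop j h),
      ENNReal.toReal_one]
  · intro k t ω ht
    rw [hprodE t ω ht, ← ENNReal.toReal_ofReal
      (Finset.prod_nonneg fun i _ => (hf0 k (ω i)).le : 0 ≤ ∏ j ∈ Finset.Ico d t, f k (ω j)),
      ← ENNReal.toReal_mul]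
    exact ENNReal.toReal_mono (hWtop _ _) (hle k t ω ht)

theorem exists_cell_representatives (d m : ℕ) : ∃ z : (Fin d → Fin (m + 1)) → RV d,
    (∀ c, z c ∈ box d) ∧ ∀ x ∈ box d, cell m (z (cell m x)) = cell m x := by
  have h : ∀ c : Fin d → Fin (m + 1), ∃ z ∈ box d, ∀ x ∈ box d, cell m x = c → cell m z = c := by
    intro c
    by_cases hc : ∃ x ∈ box d, cell m x = c
    · obtain ⟨x, hx, hxc⟩ := hc
      exact ⟨x, hx, fun _ _ _ => hxc⟩
    · exact ⟨0, by simp [box], fun x hx hxc => (hc ⟨x, hx, hxc⟩).elim⟩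
  choose z hz hzc using h
  exact ⟨z, hz, fun x hx => hzc _ x hx rfl⟩

theorem IsBoxLip.abs_sub_le {B : ℝ} {p : RV d → ℝ} (hp : IsBoxLip B p) {m : ℕ} {x y : RV d}
    (hx : x ∈ box d) (hy : y ∈ box d) (hxy : cell m x = cell m y) :
    |p x - p y| ≤ 2 * d / (m + 1) := by
  refine (hp.lipschitz x hx y hy).trans (Real.sqrt_le_iff.2 ⟨by positivity, ?_⟩)
  calc ∑ i, (x i - y i) ^ 2 ≤ ∑ _i : Fin d, (2 / (m + 1 : ℝ)) ^ 2 :=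
        Finset.sum_le_sum fun i _ => sq_le_sq' (abs_le.1 (abs_sub_le_of_cell_eq hx hy
          (congrFun hxy i))).1 (abs_le.1 (abs_sub_le_of_cell_eq hx hy (congrFun hxy i))).2
    _ = d * (2 / (m + 1 : ℝ)) ^ 2 := by simp
    _ ≤ (d : ℝ) ^ 2 * (2 / (m + 1 : ℝ)) ^ 2 := by
        gcongr
        exact_mod_cast Nat.le_self_pow two_ne_zero d
    _ = (2 * d / (m + 1 : ℝ)) ^ 2 := by ring

/-- A finite family of positive densities approximating all box-Lipschitz densities in ratio. -/
theorem exists_ratio_net {B : ℝ} (hB : 0 < B) (m : ℕ) :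
    ∃ f : ((Fin d → Fin (m + 1)) → Fin (⌊B * (m + 1)⌋₊ + 1)) → RV d → ℝ,
      (∀ c, Measurable (f c)) ∧ (∀ c x, 0 < f c x) ∧ (∀ c x, f c x ≤ B + 1) ∧
      (∀ c, ∫⁻ x, ENNReal.ofReal (f c x) = 1) ∧
      ∀ p, IsBoxLip B p → ∃ c, ∀ x ∈ box d,
        p x ≤ Real.exp ((B * (4 * d + 1) + 1) / (m + 1)) * f c x := by
  have hm : (0 : ℝ) < m + 1 := by positivity
  obtain ⟨z, hz, hzc⟩ := exists_cell_representatives d m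
  let code : (RV d → ℝ) → (Fin d → Fin (m + 1)) → Fin (⌊B * (m + 1)⌋₊ + 1) := fun p c =>
    ⟨min ⌊p (z c) * (m + 1)⌋₊ ⌊B * (m + 1 : ℝ)⌋₊, by omega⟩
  let good : (RV d → ℝ) → Prop := fun q =>
    Measurable q ∧ (∀ x, 0 ≤ q x) ∧ (∀ x, q x ≤ B + 1) ∧ ∫⁻ x, ENNReal.ofReal (q x) = 1
  have hgauss : good gaussPi := ⟨measurable_gaussPi, fun x => (gaussPi_pos x).le,
    fun x => (gaussPi_le_one x).trans (by linarith), isLogConcaveDensity_gaussPi.lintegral_eq_one⟩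
  have hrep : ∀ c, ∃ q, good q ∧ ((∃ p, IsBoxLip B p ∧ code p = c) →
      IsBoxLip B q ∧ code q = c) := by
    intro c
    by_cases hc : ∃ p, IsBoxLip B p ∧ code p = c
    · obtain ⟨q, hq, hqc⟩ := hc
      exact ⟨q, ⟨hq.measurable, hq.nonneg hB, fun x => (hq.le_bound hB x).trans (by linarith),
        hq.lintegral_eq_one⟩, fun _ => ⟨hq, hqc⟩⟩
    · exact ⟨gaussPi, hgauss, fun h => (hc h).elim⟩
  choose q hq hqc using hrep
  let a : ℝ := 1 / (m + 2)
  have ha0 : 0 < a := by positivity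
  have ha1 : 0 < 1 - a := by
    have : a < 1 := by
      rw [div_lt_one (by positivity)]
      linarith
    linarith
  refine ⟨fun c x => (1 - a) * q c x + a * gaussPi x, fun c => ?_, fun c x => ?_, fun c x => ?_,
    fun c => ?_, fun p hp => ⟨code p, fun x hx => ?_⟩⟩
  · exact ((hq c).1.const_mul _).add (measurable_gaussPi.const_mul _)
  · exact add_pos_of_nonneg_of_pos (mul_nonneg ha1.le ((hq c).2.1 x)) (mul_pos ha0 (gaussPi_pos x))
  · have h1 := (hq c).2.2.1 x
    have h2 := hgauss.2.2.1 x
    nlinarith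
  · have : ∀ x, ENNReal.ofReal ((1 - a) * q c x + a * gaussPi x) =
        ENNReal.ofReal (1 - a) * ENNReal.ofReal (q c x) +
          ENNReal.ofReal a * ENNReal.ofReal (gaussPi x) := fun x => by
      rw [ENNReal.ofReal_add (mul_nonneg ha1.le ((hq c).2.1 x))
        (mul_pos ha0 (gaussPi_pos x)).le, ENNReal.ofReal_mul ha1.le, ENNReal.ofReal_mul ha0.le]
    simp_rw [this]
    rw [lintegral_add_left ((hq c).1.ennreal_ofReal.const_mul _),
      lintegral_const_mul _ (hq c).1.ennreal_ofReal,
      lintegral_const_mul _ measurable_gaussPi.ennreal_ofReal, (hq c).2.2.2, hgauss.2.2.2,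
      mul_one, mul_one, ← ENNReal.ofReal_add ha1.le ha0.le]
    simp
  · obtain ⟨hqL, hqcode⟩ := hqc (code p) ⟨p, hp, rfl⟩
    set r := q (code p) with hr
    set y := z (cell m x) with hy
    have hyb : y ∈ box d := hz _
    have hcell : cell m x = cell m y := (hzc x hx).symm
    have hfloor : ⌊r y * (m + 1 : ℝ)⌋₊ = ⌊p y * (m + 1 : ℝ)⌋₊ := by
      have h1 := congrArg Fin.val (congrFun hqcode (cell m x))
      have h2 : ⌊r y * (m + 1 : ℝ)⌋₊ ≤ ⌊B * (m + 1 : ℝ)⌋₊ :=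
        Nat.floor_le_floor (mul_le_mul_of_nonneg_right (hqL.le_bound hB y) hm.le)
      have h3 : ⌊p y * (m + 1 : ℝ)⌋₊ ≤ ⌊B * (m + 1 : ℝ)⌋₊ :=
        Nat.floor_le_floor (mul_le_mul_of_nonneg_right (hp.le_bound hB y) hm.le)
      simp only [code] at h1
      rwa [min_eq_left h2, min_eq_left h3] at h1
    have hpr : p y ≤ r y + 1 / (m + 1) := by
      have h1 := Nat.lt_floor_add_one (p y * (m + 1 : ℝ))
      have h2 := Nat.floor_le (mul_nonneg (hqL.nonneg hB y) hm.le)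
      rw [← hfloor] at h1
      have h3 : p y * (m + 1) ≤ (r y + 1 / (m + 1)) * (m + 1) := by
        rw [add_mul, one_div, inv_mul_cancel₀ hm.ne']
        linarith
      exact le_of_mul_le_mul_right h3 hm
    have h1 := (abs_le.1 (hp.abs_sub_le hx hyb hcell)).2
    have h2 := (abs_le.1 (hqL.abs_sub_le hx hyb hcell)).1
    have h3 : p x ≤ r x + (4 * d + 1) / (m + 1) := by
      have : (4 * d + 1 : ℝ) / (m + 1) = 2 * d / (m + 1) + 2 * d / (m + 1) + 1 / (m + 1) := by
        ring
      linarith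
    have h4 : 1 ≤ B * r x := by
      have := (hqL.bounds x hx).1
      rw [div_le_iff₀ hB] at this
      linarith
    have h5 : p x ≤ (B * (4 * d + 1) / (m + 1) + 1) * r x := by
      have : (4 * d + 1 : ℝ) / (m + 1) * 1 ≤ (4 * d + 1) / (m + 1) * (B * r x) := by gcongr
      calc p x ≤ r x + (4 * d + 1) / (m + 1) := h3
        _ ≤ r x + (4 * d + 1) / (m + 1) * (B * r x) := by linarith
        _ = _ := by ring
    have h6 : r x ≤ (1 / (m + 1) + 1) * ((1 - a) * r x + a * gaussPi x) := by
      have h7 : (1 / (m + 1 : ℝ) + 1) * (1 - a) = 1 := by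
        simp only [a]
        field_simp
        ring
      have h8 : 0 ≤ (1 / (m + 1 : ℝ) + 1) * (a * gaussPi x) := by
        have := gaussPi_pos x
        positivity
      rw [mul_add, ← mul_assoc, h7, one_mul]
      linarith
    have hf : 0 ≤ (1 - a) * r x + a * gaussPi x :=
      add_nonneg (mul_nonneg ha1.le (hqL.nonneg hB x)) (mul_pos ha0 (gaussPi_pos x)).le
    calc p x ≤ (B * (4 * d + 1) / (m + 1) + 1) * r x := h5
      _ ≤ (B * (4 * d + 1) / (m + 1) + 1) *
          ((1 / (m + 1) + 1) * ((1 - a) * r x + a * gaussPi x)) := by gcongr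
      _ ≤ Real.exp (B * (4 * d + 1) / (m + 1)) *
          (Real.exp (1 / (m + 1)) * ((1 - a) * r x + a * gaussPi x)) := by
          gcongr
          · exact Real.add_one_le_exp _
          · exact Real.add_one_le_exp _
      _ = _ := by rw [← mul_assoc, ← Real.exp_add, ← add_div]

/-- An estimator sequence whose likelihood deterministically competes with every box-Lipschitz
density at every resolution. -/
theorem exists_estimator (d : ℕ) {B : ℝ} (hB : 0 < B) :
    ∃ E : (t : ℕ) → (Fin t → RV d) → RV d → ℝ, IsEstimatorSeq d E ∧
      ∀ p, IsBoxLip B p → ∀ (m t : ℕ) (ω : Seq d), d ≤ t → (∀ j, ω j ∈ box d) →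
        Real.exp (-((B + 1) * (m + 1) ^ (d + 1) +
            (B * (4 * d + 1) + 1) / (m + 1) * (t - d : ℕ))) *
          ∏ j ∈ Finset.Ico d t, p (ω j) ≤
        ∏ j ∈ Finset.Ico d t, E j (fun i : Fin j => ω i) (ω j) := by
  choose f hfm hf0 hfb hf1 hnet using fun m : ℕ => exists_ratio_net (d := d) hB m
  let w : (Σ m : ℕ, ((Fin d → Fin (m + 1)) → Fin (⌊B * (m + 1)⌋₊ + 1))) → ENNReal := fun k =>
    2⁻¹ ^ (k.1 + 1) *
      (Fintype.card ((Fin d → Fin (k.1 + 1)) → Fin (⌊B * (k.1 + 1)⌋₊ + 1)) : ENNReal)⁻¹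
  have hw : ∑' k, w k = 1 := by
    rw [ENNReal.tsum_sigma']
    simp only [w]
    have : ∀ m : ℕ, ∑' _c : (Fin d → Fin (m + 1)) → Fin (⌊B * (m + 1)⌋₊ + 1),
        (2⁻¹ : ENNReal) ^ (m + 1) *
          (Fintype.card ((Fin d → Fin (m + 1)) → Fin (⌊B * (m + 1)⌋₊ + 1)) : ENNReal)⁻¹ =
        2⁻¹ ^ (m + 1) := by
      intro m
      rw [tsum_fintype, Finset.sum_const, Finset.card_univ, nsmul_eq_mul, mul_left_comm,
        ENNReal.mul_inv_cancel (by simp) (ENNReal.natCast_ne_top _), mul_one]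
    simp_rw [this]
    rw [ENNReal.tsum_geometric_add_one, ENNReal.one_sub_inv_two, inv_inv,
      ENNReal.inv_mul_cancel two_ne_zero ENNReal.ofNat_ne_top]
  obtain ⟨E, hE, hprod⟩ := exists_mixture_estimator w hw (f := fun k => f k.1 k.2)
    (fun k => hfm k.1 k.2) (fun k => hf0 k.1 k.2) (fun k => hfb k.1 k.2) (fun k => hf1 k.1 k.2)
  refine ⟨E, hE, fun p hp m t ω ht hω => ?_⟩
  obtain ⟨c, hc⟩ := hnet m p hp
  refine le_trans ?_ (hprod ⟨m, c⟩ t ω ht)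
  simp only
  have hpf : ∏ j ∈ Finset.Ico d t, p (ω j) ≤
      Real.exp ((B * (4 * d + 1) + 1) / (m + 1) * (t - d : ℕ)) *
        ∏ j ∈ Finset.Ico d t, f m c (ω j) := by
    calc ∏ j ∈ Finset.Ico d t, p (ω j)
        ≤ ∏ j ∈ Finset.Ico d t,
            (Real.exp ((B * (4 * d + 1) + 1) / (m + 1)) * f m c (ω j)) :=
          Finset.prod_le_prod (fun j _ => hp.nonneg hB _) fun j _ => hc _ (hω j)
      _ = _ := by
          rw [Finset.prod_mul_distrib, Finset.prod_const, Nat.card_Ico, ← Real.exp_nat_mul,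
            mul_comm ((t - d : ℕ) : ℝ)]
  have hw' : Real.exp (-((B + 1) * (m + 1) ^ (d + 1))) ≤ (w ⟨m, c⟩).toReal := by
    have hm1 : (1 : ℝ) ≤ m + 1 := by
      have : (0 : ℝ) ≤ m := by positivity
      linarith
    have hcard : ((⌊B * (m + 1 : ℝ)⌋₊ + 1 : ℕ) : ℝ) ^ ((m + 1) ^ d) ≤
        Real.exp (B * (m + 1) ^ (d + 1)) := by
      have h1 : ((⌊B * (m + 1 : ℝ)⌋₊ + 1 : ℕ) : ℝ) ≤ Real.exp (B * (m + 1)) := by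
        push_cast
        refine le_trans ?_ (Real.add_one_le_exp _)
        gcongr
        exact Nat.floor_le (by positivity)
      refine (pow_le_pow_left₀ (by positivity) h1 _).trans (le_of_eq ?_)
      rw [← Real.exp_nat_mul]
      congr 1
      push_cast
      ring
    have h2 : (2 : ℝ) ^ (m + 1) ≤ Real.exp ((m + 1) ^ (d + 1)) := by
      have h3 : (2 : ℝ) ^ (m + 1) ≤ Real.exp 1 ^ (m + 1) := by
        gcongr
        have := Real.add_one_le_exp (1 : ℝ)
        linarith
      refine h3.trans ?_
      rw [← Real.exp_nat_mul, Real.exp_le_exp]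
      push_cast
      rw [mul_one]
      exact le_self_pow₀ hm1 (Nat.succ_ne_zero d)
    have hval : (w ⟨m, c⟩).toReal =
        ((2 : ℝ) ^ (m + 1) * ((⌊B * (m + 1 : ℝ)⌋₊ + 1 : ℕ) : ℝ) ^ ((m + 1) ^ d))⁻¹ := by
      have hcard' : Fintype.card ((Fin d → Fin (m + 1)) → Fin (⌊B * (m + 1)⌋₊ + 1)) =
          (⌊B * (m + 1 : ℝ)⌋₊ + 1) ^ ((m + 1) ^ d) := by simp
      simp only [w]
      rw [hcard', ENNReal.toReal_mul, ENNReal.toReal_inv, ENNReal.toReal_natCast, mul_inv,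
        ENNReal.toReal_pow, ENNReal.toReal_inv, ENNReal.toReal_ofNat, inv_pow, Nat.cast_pow]
    rw [hval, Real.exp_neg]
    refine inv_anti₀ (by positivity) ?_
    calc _ ≤ Real.exp ((m + 1) ^ (d + 1)) * Real.exp (B * (m + 1) ^ (d + 1)) := by gcongr
      _ = Real.exp ((B + 1) * (m + 1) ^ (d + 1)) := by
          rw [← Real.exp_add]
          ring_nf
  have hf : 0 ≤ ∏ j ∈ Finset.Ico d t, f m c (ω j) :=
    Finset.prod_nonneg fun j _ => (hf0 m c _).le
  calc Real.exp (-((B + 1) * (m + 1) ^ (d + 1) +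
            (B * (4 * d + 1) + 1) / (m + 1) * (t - d : ℕ))) * ∏ j ∈ Finset.Ico d t, p (ω j)
      ≤ Real.exp (-((B + 1) * (m + 1) ^ (d + 1) +
            (B * (4 * d + 1) + 1) / (m + 1) * (t - d : ℕ))) *
          (Real.exp ((B * (4 * d + 1) + 1) / (m + 1) * (t - d : ℕ)) *
        ∏ j ∈ Finset.Ico d t, f m c (ω j)) := by gcongr
    _ = Real.exp (-((B + 1) * (m + 1) ^ (d + 1))) * ∏ j ∈ Finset.Ico d t, f m c (ω j) := by
        rw [← mul_assoc, ← Real.exp_add]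
        congr 2
        ring
    _ ≤ _ := by gcongr

theorem measurableSet_corner (s : Fin d → Bool) : MeasurableSet (corner s) := by
  have : corner s = ⋂ i, {x : RV d | if s i then 1 / 2 ≤ x i else x i ≤ -(1 / 2)} := by
    ext x
    simp [corner]
  rw [this]
  refine MeasurableSet.iInter fun i => ?_
  split_ifs
  · exact measurableSet_le measurable_const (measurable_pi_apply i)
  · exact measurableSet_le (measurable_pi_apply i) measurable_const

theorem IsBoxLip.le_measure_corner {B : ℝ} {p : RV d → ℝ} (hp : IsBoxLip B p) (hB : 0 < B)
    (s : Fin d → Bool) : ENNReal.ofReal (1 / (B * 2 ^ d)) ≤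
      (volume.withDensity fun x => ENNReal.ofReal (p x)) (corner s) := by
  let lo : Fin d → ℝ := fun i => if s i then 1 / 2 else -1
  let Q : Set (RV d) := Set.univ.pi fun i => Set.Icc (lo i) (lo i + 1 / 2)
  have hlo : ∀ i, lo i = 1 / 2 ∧ s i = true ∨ lo i = -1 ∧ s i = false := fun i => by
    by_cases h : s i <;> simp [lo, h]
  have hQc : Q ⊆ corner s := fun x hx i => by
    have : x i ∈ Set.Icc (lo i) (lo i + 1 / 2) := hx i (Set.mem_univ i)
    rcases hlo i with ⟨h1, h2⟩ | ⟨h1, h2⟩ <;> rw [h1] at this <;> simp only [h2]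
    · simpa using this.1
    · have := this.2
      norm_num at this ⊢
      linarith
  have hQb : Q ⊆ box d := fun x hx i => by
    have : x i ∈ Set.Icc (lo i) (lo i + 1 / 2) := hx i (Set.mem_univ i)
    rcases hlo i with ⟨h1, h2⟩ | ⟨h1, h2⟩ <;> rw [h1] at this <;>
      exact abs_le.2 ⟨by linarith [this.1], by linarith [this.2]⟩
  have hQm : MeasurableSet Q := MeasurableSet.univ_pi fun i => measurableSet_Icc
  have hvol : volume Q = ENNReal.ofReal (1 / 2) ^ d := by
    simp only [Q]
    rw [volume_pi_pi]
    simp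
  calc ENNReal.ofReal (1 / (B * 2 ^ d)) = ENNReal.ofReal (1 / B) * volume Q := by
        rw [hvol, ← ENNReal.ofReal_pow (by norm_num), ← ENNReal.ofReal_mul (by positivity)]
        congr 1
        rw [div_pow, one_pow]
        field_simp
    _ = ∫⁻ _ in Q, ENNReal.ofReal (1 / B) := by rw [setLIntegral_const]
    _ ≤ ∫⁻ x in Q, ENNReal.ofReal (p x) :=
        setLIntegral_mono' hQm fun x hx => ENNReal.ofReal_le_ofReal (hp.bounds x (hQb hx)).1
    _ = (volume.withDensity fun x => ENNReal.ofReal (p x)) Q := (withDensity_apply _ hQm).symm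
    _ ≤ _ := measure_mono hQc

theorem IsIIDLaw.measure_sum_indicator_lt_le {μ : Measure (Seq d)} {P : Measure (RV d)}
    [IsProbabilityMeasure P] (h : IsIIDLaw d μ P) {S : Set (RV d)} (hS : MeasurableSet S) {r : ℝ}
    (hr : ENNReal.ofReal r ≤ P S) (t : ℕ) :
    μ {ω | ∑ j ∈ Finset.Ico d t, S.indicator 1 (ω j) < r / 4 * (t - d : ℕ)} ≤
      ENNReal.ofReal (Real.exp (-(r / 4 * (t - d : ℕ)))) := by
  have hind : Measurable (S.indicator (1 : RV d → ℝ)) := measurable_one.indicator hS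
  have hinteg : Integrable (S.indicator (1 : RV d → ℝ)) P :=
    (integrable_const (1 : ℝ)).indicator hS
  have hle : ∀ x, Real.exp (-S.indicator (1 : RV d → ℝ) x) ≤ 1 - S.indicator 1 x / 2 := fun x => by
    by_cases hx : x ∈ S
    · have h1 : Real.exp (-1) ≤ 1 / 2 := by
        rw [Real.exp_neg, inv_le_comm₀ (Real.exp_pos 1) (by norm_num)]
        linarith [Real.add_one_le_exp (1 : ℝ)]
      simp only [hx, Set.indicator_of_mem, Pi.one_apply]
      linarith
    · simp [hx]
  have hb : ∫⁻ x, ENNReal.ofReal (Real.exp (-S.indicator (1 : RV d → ℝ) x)) ∂P ≤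
      ENNReal.ofReal (Real.exp (-(r / 2))) := by
    calc _ ≤ ∫⁻ x, ENNReal.ofReal (1 - S.indicator 1 x / 2) ∂P :=
          lintegral_mono fun x => ENNReal.ofReal_le_ofReal (hle x)
      _ = ENNReal.ofReal (∫ x, (1 - S.indicator 1 x / 2) ∂P) :=
          (ofReal_integral_eq_lintegral_ofReal ((integrable_const _).sub (hinteg.div_const 2))
            (.of_forall fun x => (Real.exp_pos _).le.trans (hle x))).symm
      _ ≤ _ := by
          refine ENNReal.ofReal_le_ofReal ?_
          rw [integral_sub (integrable_const _) (hinteg.div_const 2), integral_div,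
            integral_indicator_one hS, integral_const, probReal_univ, one_smul]
          have h1 : r ≤ P.real S := (ENNReal.ofReal_le_iff_le_toReal (measure_ne_top _ _)).1 hr
          linarith [Real.one_sub_le_exp_neg (r / 2)]
  refine le_trans (measure_mono fun ω hω => ?_)
    ((h.measure_exp_le_prod_le (a := r / 4) (Real.measurable_exp.comp hind.neg)
      (fun x => (Real.exp_pos _).le) hb t).trans (le_of_eq (by ring_nf)))
  simp only [Set.mem_ofPred_eq, Function.comp_apply, Pi.neg_apply] at hω ⊢
  rw [← Real.exp_sum, Real.exp_le_exp, Finset.sum_neg_distrib]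
  linarith

/-- The step function bracketing the square root of a log-concave density from above. -/
def bracketFn (G : ℝ) (m : ℕ) (U : (Fin d → Fin (m + 1)) → Fin (m + 2)) (x : RV d) : ℝ :=
  G / (m + 1) * ((U (cell m x) : ℕ) + 1)

theorem measurable_bracketFn (G : ℝ) (m : ℕ) (U : (Fin d → Fin (m + 1)) → Fin (m + 2)) :
    Measurable (bracketFn G m U) :=
  (measurable_of_countable fun c : Fin d → Fin (m + 1) => G / (m + 1) * (((U c : ℕ) : ℝ) + 1)).comp
    (measurable_cell m)

theorem IsBoxLip.isProbabilityMeasure {B : ℝ} {p : RV d → ℝ} (hp : IsBoxLip B p) :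
    IsProbabilityMeasure (volume.withDensity fun x => ENNReal.ofReal (p x)) :=
  ⟨by rw [withDensity_apply _ MeasurableSet.univ, Measure.restrict_univ, hp.lintegral_eq_one]⟩

theorem IsBoxLip.measure_bracket_le {B : ℝ} {p : RV d → ℝ} (hp : IsBoxLip B p) (hB : 0 < B)
    {μ : Measure (Seq d)} (h : IsIIDLaw d μ (volume.withDensity fun x => ENNReal.ofReal (p x)))
    {G : ℝ} (hG : 0 < G) {m : ℕ} {U : (Fin d → Fin (m + 1)) → Fin (m + 2)} {b : ℝ}
    (hU : ∫⁻ x, ENNReal.ofReal (√(p x) * bracketFn G m U x) ≤ ENNReal.ofReal (1 - b)) (a : ℝ)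
    (t : ℕ) :
    μ {ω | Real.exp (-(a * (t - d : ℕ))) ≤
      ∏ j ∈ Finset.Ico d t, bracketFn G m U (ω j) / √(p (ω j))} ≤
      ENNReal.ofReal (Real.exp (-((b - a) * (t - d : ℕ)))) := by
  have := hp.isProbabilityMeasure
  have hm : Measurable fun x => bracketFn G m U x / √(p x) :=
    (measurable_bracketFn G m U).div hp.measurable.sqrt
  refine h.measure_exp_le_prod_le (v := fun x => bracketFn G m U x / √(p x)) hm
    (fun x => div_nonneg (by unfold bracketFn; positivity) (Real.sqrt_nonneg _)) ?_ t
  rw [lintegral_withDensity_eq_lintegral_mul _ hp.measurable.ennreal_ofReal hm.ennreal_ofReal]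
  refine le_trans (le_of_eq (lintegral_congr fun x => ?_))
    (hU.trans (ENNReal.ofReal_le_ofReal (Real.one_sub_le_exp_neg b)))
  rw [Pi.mul_apply, ← ENNReal.ofReal_mul (hp.nonneg hB x), mul_div_left_comm, Real.div_sqrt,
    mul_comm]

/-- On a typical sample path every log-concave likelihood is exponentially smaller than the true
likelihood. -/
theorem IsBoxLip.prod_logConcave_le {B : ℝ} {p : RV d → ℝ} (hp : IsBoxLip B p) (hB : 1 < B)
    {c v₀ ε : ℝ} (hc0 : 0 < c) (hc1 : c ≤ 1) (hv₀ : 1 ≤ v₀) (hv₀B : Real.log B + 1 ≤ v₀)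
    (hlt : ∀ v ≥ v₀, (2 / c * v) ^ d < Real.exp (v - 1))
    (hε : ε = dHLC d (volume.withDensity fun x => ENNReal.ofReal (p x))) {m : ℕ}
    (hm : √B * (2 ^ d * Real.exp (v₀ / 2) * (1 + 6 ^ d)) / (m + 1) ≤ ε ^ 2 / 2)
    {t : ℕ} {ω : Seq d} (hω : ∀ j, ω j ∈ box d)
    (hcorner : ∀ s, c * (t - d : ℕ) ≤ ∑ j ∈ Finset.Ico d t, (corner s).indicator 1 (ω j))
    (hbr : ∀ U : (Fin d → Fin (m + 1)) → Fin (m + 2),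
      ∫⁻ x, ENNReal.ofReal (√(p x) * bracketFn (Real.exp (v₀ / 2)) m U x) ≤
        ENNReal.ofReal (1 - ε ^ 2 / 2) →
      ∏ j ∈ Finset.Ico d t, bracketFn (Real.exp (v₀ / 2)) m U (ω j) / √(p (ω j)) <
        Real.exp (-(ε ^ 2 / 4 * (t - d : ℕ))))
    {ℓ : RV d → ℝ} (hℓ : IsLogConcaveDensity d ℓ) :
    ∏ j ∈ Finset.Ico d t, ℓ (ω j) ≤
      Real.exp (-(ε ^ 2 / 2 * (t - d : ℕ))) * ∏ j ∈ Finset.Ico d t, p (ω j) := by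
  have hB0 : 0 < B := by linarith
  have hε0 : 0 ≤ ε ^ 2 := sq_nonneg ε
  have hε1 : ε ^ 2 ≤ 1 := by
    have h0 : 0 ≤ ε := by
      rw [hε]
      refine Real.sInf_nonneg ?_
      rintro r ⟨L, -, rfl⟩
      unfold hellinger
      positivity
    exact pow_le_one₀ h0 (hε ▸ hp.dHLC_le_one hB0)
  by_cases hlarge : ∃ j ∈ Finset.Ico d t, Real.exp v₀ < ℓ (ω j)
  · obtain ⟨j₀, hj₀, hj₀v⟩ := hlarge
    have h1 := hℓ.prod_le_of_large hc0 hc1 hv₀ hlt (S := Finset.Ico d t) (X := ω)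
      (by simpa only [Nat.card_Ico] using hcorner) hj₀ hj₀v
    have h2 : Real.exp (-(Real.log B * (t - d : ℕ))) ≤ ∏ j ∈ Finset.Ico d t, p (ω j) := by
      calc Real.exp (-(Real.log B * (t - d : ℕ))) = ∏ _j ∈ Finset.Ico d t, 1 / B := by
            rw [Finset.prod_const, Nat.card_Ico, one_div, ← mul_neg_one, mul_right_comm,
              mul_comm, Real.exp_nat_mul, mul_neg_one, Real.exp_neg, Real.exp_log hB0]
        _ ≤ _ := Finset.prod_le_prod (fun j _ => by positivity) fun j _ =>
            (hp.bounds _ (hω j)).1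
    calc _ ≤ Real.exp (-(v₀ * (t - d : ℕ))) := by simpa only [Nat.card_Ico] using h1
      _ ≤ Real.exp (-(ε ^ 2 / 2 * (t - d : ℕ))) * Real.exp (-(Real.log B * (t - d : ℕ))) := by
          rw [← Real.exp_add, Real.exp_le_exp, ← neg_add, ← add_mul]
          gcongr
          linarith
      _ ≤ _ := by gcongr
  · push Not at hlarge
    obtain ⟨U, hU1, hU2⟩ := exists_bracket_affinity m (g := fun x => √(ℓ x))
      (fun x => Real.sqrt_nonneg _) hℓ.1.sqrt hp.measurable
      (fun s => hℓ.2.1.convex_superlevel_sqrt s) (Real.exp_pos (v₀ / 2)) hp.eq_zero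
      (fun x hx => (hp.bounds x hx).2)
    have haff := hp.lintegral_sqrt_mul_sqrt_le hB0 hℓ
    rw [← hε] at haff
    have hU3 := hbr U <| hU2.trans <| (add_le_add_left haff _).trans <| by
      rw [← ENNReal.ofReal_add (by linarith) (by positivity)]
      exact ENNReal.ofReal_le_ofReal (by linarith)
    have hpos : ∀ j, 0 < p (ω j) := fun j => hp.pos hB0 (hω j)
    have hroot : ∏ j ∈ Finset.Ico d t, √(ℓ (ω j)) / √(p (ω j)) ≤
        Real.exp (-(ε ^ 2 / 4 * (t - d : ℕ))) := by
      refine le_trans (Finset.prod_le_prod (fun j _ => by positivity) fun j hj => ?_) hU3.le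
      gcongr
      refine hU1 _ ?_
      rw [Real.exp_half]
      exact Real.sqrt_le_sqrt (hlarge j hj)
    have hsq : ∏ j ∈ Finset.Ico d t, ℓ (ω j) =
        (∏ j ∈ Finset.Ico d t, √(ℓ (ω j)) / √(p (ω j))) ^ 2 * ∏ j ∈ Finset.Ico d t, p (ω j) := by
      rw [← Finset.prod_pow, ← Finset.prod_mul_distrib]
      refine Finset.prod_congr rfl fun j _ => ?_
      rw [div_pow, Real.sq_sqrt (hℓ.2.1.1 _), Real.sq_sqrt (hpos j).le,
        div_mul_cancel₀ _ (hpos j).ne']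
    rw [hsq]
    refine mul_le_mul_of_nonneg_right ?_ (Finset.prod_nonneg fun j _ => (hpos j).le)
    calc _ ≤ Real.exp (-(ε ^ 2 / 4 * (t - d : ℕ))) ^ 2 := by
          gcongr
      _ = _ := by
          rw [← Real.exp_nat_mul]
          congr 1
          push_cast
          ring

theorem one_div_le_ULR {E : (t : ℕ) → (Fin t → RV d) → RV d → ℝ} {t : ℕ} (ht : d < t) {ω : Seq d}
    {a b L α : ℝ} (hα : 0 < α) (hL : 0 ≤ L)
    (hsup : ∀ ℓ, IsLogConcaveDensity d ℓ → ∏ j ∈ Finset.Ico d t, ℓ (ω j) ≤ Real.exp (-a) * L)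
    (hE : Real.exp (-b) * L ≤ ∏ j ∈ Finset.Ico d t, E j (fun i : Fin j => ω i) (ω j))
    (hab : Real.log (1 / α) + b ≤ a) : 1 / α ≤ ULR d E t ω := by
  rw [ULR, if_neg (not_le.2 ht)]
  have hbdd : BddAbove (Set.range fun p : {p : RV d → ℝ // IsLogConcaveDensity d p} =>
      ∏ j ∈ Finset.Ico d t, p.1 (ω j)) := by
    refine ⟨Real.exp (-a) * L, ?_⟩
    rintro _ ⟨p, rfl⟩
    exact hsup p.1 p.2
  have hpos : 0 < ⨆ p : {p : RV d → ℝ // IsLogConcaveDensity d p},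
      ∏ j ∈ Finset.Ico d t, p.1 (ω j) :=
    (Finset.prod_pos fun j _ => gaussPi_pos (ω j)).trans_le
      (le_ciSup hbdd ⟨gaussPi, isLogConcaveDensity_gaussPi⟩)
  have hle : ⨆ p : {p : RV d → ℝ // IsLogConcaveDensity d p},
      ∏ j ∈ Finset.Ico d t, p.1 (ω j) ≤ Real.exp (-a) * L :=
    Real.iSup_le (fun p => hsup p.1 p.2) (by positivity)
  rw [le_div_iff₀ hpos]
  calc _ ≤ 1 / α * (Real.exp (-a) * L) := by gcongr
    _ = Real.exp (Real.log (1 / α) + -a) * L := by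
        rw [Real.exp_add, Real.exp_log (by positivity), mul_assoc]
    _ ≤ Real.exp (-b) * L := by
        gcongr
        linarith
    _ ≤ _ := hE

/-- Tail bound for the ULR process at a fixed time. -/
theorem IsBoxLip.measure_ULR_lt_le {B : ℝ} {p : RV d → ℝ} (hp : IsBoxLip B p) (hB : 1 < B)
    {μ : Measure (Seq d)} (h : IsIIDLaw d μ (volume.withDensity fun x => ENNReal.ofReal (p x)))
    {E : (t : ℕ) → (Fin t → RV d) → RV d → ℝ} {α r v₀ ε : ℝ} (hα : 0 < α)
    (hr : r = 1 / (B * 2 ^ d)) (hv₀ : 1 ≤ v₀) (hv₀B : Real.log B + 1 ≤ v₀)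
    (hlt : ∀ v ≥ v₀, (2 / (r / 4) * v) ^ d < Real.exp (v - 1))
    (hε : ε = dHLC d (volume.withDensity fun x => ENNReal.ofReal (p x))) {m t : ℕ} (ht : d < t)
    (hm : √B * (2 ^ d * Real.exp (v₀ / 2) * (1 + 6 ^ d)) / (m + 1) ≤ ε ^ 2 / 2) {b : ℝ}
    (hE : ∀ ω : Seq d, (∀ j, ω j ∈ box d) → Real.exp (-b) * ∏ j ∈ Finset.Ico d t, p (ω j) ≤
      ∏ j ∈ Finset.Ico d t, E j (fun i : Fin j => ω i) (ω j))
    (hb : Real.log (1 / α) + b ≤ ε ^ 2 / 2 * (t - d : ℕ)) :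
    μ {ω | ULR d E t ω < 1 / α} ≤ ENNReal.ofReal (2 ^ d * Real.exp (-(r / 4 * (t - d : ℕ))) +
      Real.exp ((m + 1) ^ (d + 1) - ε ^ 2 / 4 * (t - d : ℕ))) := by
  have hB0 : 0 < B := by linarith
  have hr0 : 0 < r := by rw [hr]; positivity
  have hr1 : r / 4 ≤ 1 := by
    have : r ≤ 1 := by
      rw [hr, div_le_one (by positivity)]
      exact one_le_mul_of_one_le_of_one_le hB.le (one_le_pow₀ one_le_two)
    linarith
  have hprob := hp.isProbabilityMeasure
  set G := Real.exp (v₀ / 2) with hG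
  let V : Finset ((Fin d → Fin (m + 1)) → Fin (m + 2)) := Finset.univ.filter fun U =>
    ∫⁻ x, ENNReal.ofReal (√(p x) * bracketFn G m U x) ≤ ENNReal.ofReal (1 - ε ^ 2 / 2)
  let N₁ : Set (Seq d) := {ω | ¬ ∀ j, ω j ∈ box d}
  let N₂ : (Fin d → Bool) → Set (Seq d) := fun s =>
    {ω | ∑ j ∈ Finset.Ico d t, (corner s).indicator 1 (ω j) < r / 4 * (t - d : ℕ)}
  let N₃ : ((Fin d → Fin (m + 1)) → Fin (m + 2)) → Set (Seq d) := fun U =>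
    {ω | Real.exp (-(ε ^ 2 / 4 * (t - d : ℕ))) ≤
      ∏ j ∈ Finset.Ico d t, bracketFn G m U (ω j) / √(p (ω j))}
  have hsub : {ω | ULR d E t ω < 1 / α} ⊆
      N₁ ∪ ((⋃ s ∈ (Finset.univ : Finset (Fin d → Bool)), N₂ s) ∪ ⋃ U ∈ V, N₃ U) := by
    intro ω hω
    by_contra hcon
    simp only [Set.mem_union, Set.mem_iUnion, not_or, not_exists, Finset.mem_univ,
      N₁, N₂, N₃, V, Set.mem_ofPred_eq, not_not, not_lt, not_le, Finset.mem_filter, true_and,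
      forall_const] at hcon
    obtain ⟨hbox, hcorner, hbr⟩ := hcon
    refine absurd hω (not_lt.2 (one_div_le_ULR ht hα
      (Finset.prod_nonneg fun j _ => hp.nonneg hB0 _) (fun ℓ hℓ => ?_) (hE ω hbox) hb))
    exact hp.prod_logConcave_le hB (by positivity) hr1 hv₀ hv₀B hlt hε hm hbox hcorner hbr hℓ
  have h₁ : μ N₁ = 0 := by
    refine h.ae_coord (S := box d) ?_
    rw [ae_withDensity_iff hp.measurable.ennreal_ofReal]
    refine .of_forall fun x hx => ?_
    by_contra hxb
    simp [hp.eq_zero x hxb] at hx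
  have h₂ : μ (⋃ s ∈ (Finset.univ : Finset (Fin d → Bool)), N₂ s) ≤
      ENNReal.ofReal (2 ^ d * Real.exp (-(r / 4 * (t - d : ℕ)))) := by
    refine (measure_biUnion_finset_le _ _).trans ((Finset.sum_le_sum fun s _ =>
      h.measure_sum_indicator_lt_le (measurableSet_corner s)
        (hr ▸ hp.le_measure_corner hB0 s) t).trans (le_of_eq ?_))
    rw [Finset.sum_const, Finset.card_univ, nsmul_eq_mul, ENNReal.ofReal_mul (by positivity)]
    simp
  have h₃ : μ (⋃ U ∈ V, N₃ U) ≤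
      ENNReal.ofReal (Real.exp ((m + 1) ^ (d + 1) - ε ^ 2 / 4 * (t - d : ℕ))) := by
    have hcard : (V.card : ℝ) ≤ Real.exp ((m + 1) ^ (d + 1)) := by
      calc (V.card : ℝ) ≤ ((m + 2 : ℕ) : ℝ) ^ ((m + 1) ^ d) := by
            have := Finset.card_le_univ V
            simp only [Fintype.card_pi, Fintype.card_fin, Finset.prod_const, Finset.card_univ]
              at this
            exact_mod_cast this
        _ ≤ Real.exp (m + 1) ^ ((m + 1) ^ d) := by
            gcongr
            push_cast
            linarith [Real.add_one_le_exp (m + 1 : ℝ)]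
        _ = _ := by
            rw [← Real.exp_nat_mul]
            push_cast
            ring_nf
    refine (measure_biUnion_finset_le _ _).trans ((Finset.sum_le_sum fun U hU =>
      hp.measure_bracket_le hB0 h (Real.exp_pos _) (Finset.mem_filter.1 hU).2 _ t).trans ?_)
    rw [Finset.sum_const, nsmul_eq_mul, ← ENNReal.ofReal_natCast,
      ← ENNReal.ofReal_mul (by positivity), sub_eq_add_neg ((m + 1 : ℝ) ^ (d + 1)), Real.exp_add]
    refine ENNReal.ofReal_le_ofReal (mul_le_mul hcard (le_of_eq ?_) (by positivity) (by positivity))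
    congr 2
    ring
  calc μ {ω | ULR d E t ω < 1 / α} ≤ _ := measure_mono hsub
    _ ≤ μ N₁ + (μ (⋃ s ∈ (Finset.univ : Finset (Fin d → Bool)), N₂ s) + μ (⋃ U ∈ V, N₃ U)) :=
        (measure_union_le _ _).trans (by gcongr; exact measure_union_le _ _)
    _ ≤ _ := by
        rw [h₁, zero_add, ENNReal.ofReal_add (by positivity) (by positivity)]
        exact add_le_add h₂ h₃

theorem tsum_le_of_exp_tail {f : ℕ → ENNReal} (hf : ∀ t, f t ≤ 1) {T : ℕ} {K a : ℝ} (hK : 0 ≤ K)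
    (ha : 0 < a) (htail : ∀ i, f (i + T) ≤ ENNReal.ofReal (K * Real.exp (-(a * i)))) :
    ∑' t, f t ≤ ENNReal.ofReal (T + K * (1 + 1 / a)) := by
  have hhead : ∑ i ∈ Finset.range T, f i ≤ ENNReal.ofReal T := by
    refine (Finset.sum_le_sum fun i _ => hf i).trans (le_of_eq ?_)
    simp
  have hexp : Real.exp (-a) ≤ 1 / (1 + a) := by
    rw [Real.exp_neg, ← one_div]
    exact one_div_le_one_div_of_le (by positivity) (by linarith [Real.add_one_le_exp a])
  have hlow : a / (1 + a) ≤ 1 - Real.exp (-a) := by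
    have : a / (1 + a) = 1 - 1 / (1 + a) := by
      field_simp
      ring
    linarith
  have hgeom : ∑' i, f (i + T) ≤ ENNReal.ofReal (K * (1 + 1 / a)) := by
    calc ∑' i, f (i + T) ≤ ∑' i, ENNReal.ofReal K * ENNReal.ofReal (Real.exp (-a)) ^ i := by
          refine ENNReal.tsum_le_tsum fun i => (htail i).trans (le_of_eq ?_)
          rw [ENNReal.ofReal_mul hK, ← ENNReal.ofReal_pow (Real.exp_pos _).le,
            ← Real.exp_nat_mul]
          ring_nf
      _ = ENNReal.ofReal (K * (1 - Real.exp (-a))⁻¹) := by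
          rw [ENNReal.tsum_mul_left, ENNReal.tsum_geometric, ENNReal.ofReal_mul hK,
            ENNReal.ofReal_inv_of_pos (lt_of_lt_of_le (by positivity) hlow),
            ENNReal.ofReal_sub _ (Real.exp_pos _).le, ENNReal.ofReal_one]
      _ ≤ ENNReal.ofReal (K * (1 + 1 / a)) := by
          refine ENNReal.ofReal_le_ofReal (mul_le_mul_of_nonneg_left ?_ hK)
          refine (inv_anti₀ (by positivity) hlow).trans (le_of_eq ?_)
          rw [inv_div, add_div, div_self ha.ne', add_comm]
  have hsplit : ∑' t, f t = ∑ i ∈ Finset.range T, f i + ∑' i, f (i + T) :=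
    (Summable.sum_add_tsum_nat_add' (f := f) ENNReal.summable).symm
  have hpos : 0 ≤ K * (1 + 1 / a) := by positivity
  rw [hsplit, ENNReal.ofReal_add (Nat.cast_nonneg T) hpos]
  exact add_le_add hhead hgeom

end

/-- For the box–Lipschitz–bounded class, there is an estimator sequence
such that the expected ULR rejection time is `Õ(d_H(p,𝓛)^{−2(d+3)})`; the expectation
`E[τ_α]` is written as `∑_t P^∞(τ_α > t)`. -/
theorem statement18 (hd : 0 < d) (B : ℝ) (hB : 1 < B)
    (α : ℝ) (hα0 : 0 < α) (hα1 : α ≤ 1) :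
    ∃ (E : (t : ℕ) → (Fin t → RV d) → RV d → ℝ) (C : ℝ) (k : ℕ),
      IsEstimatorSeq d E ∧ 0 < C ∧
      ∀ P ∈ DBoxLip d B, P ∉ logConcaveLaws d → 0 < dHLC d P →
        ∀ μ : Measure (Seq d), IsIIDLaw d μ P →
          ∑' t : ℕ, μ {ω | ∀ s ≤ t, ULR d E s ω < 1 / α} ≤
            ENNReal.ofReal (C * dHLC d P ^ (-(2 * ((d : ℝ) + 3))) *
              (1 + Real.log (1 / dHLC d P)) ^ k) := by
  have hB0 : 0 < B := by linarith
  obtain ⟨E, hEseq, hE⟩ := exists_estimator d hB0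
  obtain ⟨r, hr⟩ : ∃ r, r = 1 / (B * 2 ^ d) := ⟨_, rfl⟩
  have hr0 : 0 < r := by rw [hr]; positivity
  have hr1 : r ≤ 1 := by
    rw [hr, div_le_one (by positivity)]
    exact one_le_mul_of_one_le_of_one_le hB.le (one_le_pow₀ one_le_two)
  obtain ⟨v₀, hv₀, hv₀B, hlt⟩ := exists_forall_mul_pow_lt_exp d (2 / (r / 4)) (Real.log B + 1)
  obtain ⟨Cn, hCn⟩ : ∃ Cn, Cn = B * (4 * d + 1) + 1 := ⟨_, rfl⟩
  obtain ⟨Cb, hCb⟩ : ∃ Cb, Cb = √B * (2 ^ d * Real.exp (v₀ / 2) * (1 + 6 ^ d)) := ⟨_, rfl⟩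
  have hCn0 : 0 ≤ Cn := by rw [hCn]; positivity
  have hCb0 : 0 ≤ Cb := by rw [hCb]; positivity
  obtain ⟨C₀, hC₀⟩ : ∃ C₀, C₀ = 4 * Cn + 2 * Cb + 1 := ⟨_, rfl⟩
  have hC₀0 : 0 < C₀ := by rw [hC₀]; positivity
  have hlogα : 0 ≤ Real.log (1 / α) := Real.log_nonneg (one_le_one_div hα0 hα1)
  obtain ⟨Λ₀, hΛ₀⟩ : ∃ Λ₀, Λ₀ = (B + 1) * (C₀ + 1) ^ (d + 1) + Real.log (1 / α) := ⟨_, rfl⟩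
  have hΛ₀0 : 0 ≤ Λ₀ := by rw [hΛ₀]; positivity
  obtain ⟨K, hK⟩ : ∃ K : ℝ, K = 2 ^ d + 1 := ⟨_, rfl⟩
  have hK0 : 0 < K := by rw [hK]; positivity
  refine ⟨E, d + 2 + K + 8 * Λ₀ + 8 * K / r, 0, hEseq, by positivity, fun P hP _ hε0 μ hμ => ?_⟩
  obtain ⟨p, hp, rfl⟩ := exists_isBoxLip_of_mem hP
  have hε1 := hp.dHLC_le_one hB0
  obtain ⟨ε, hε⟩ : ∃ ε, ε = dHLC d (volume.withDensity fun x => ENNReal.ofReal (p x)) := ⟨_, rfl⟩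
  rw [← hε] at hε0 hε1 ⊢
  obtain ⟨y, hy⟩ : ∃ y, y = (ε ^ 2)⁻¹ := ⟨_, rfl⟩
  have hyε : ε ^ 2 = y⁻¹ := by rw [hy, inv_inv]
  have hy1 : 1 ≤ y := by
    rw [hy]
    exact (one_le_inv₀ (by positivity)).2 (pow_le_one₀ hε0.le hε1)
  have hy0 : 0 < y := by linarith
  have hrpow : ε ^ (-(2 * ((d : ℝ) + 3))) = y ^ (d + 3) := by
    rw [hy, inv_pow, ← pow_mul, Real.rpow_neg hε0.le, ← Real.rpow_natCast]
    push_cast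
    rfl
  rw [pow_zero, mul_one, hrpow]
  obtain ⟨m, hm⟩ : ∃ m : ℕ, m + 1 = ⌈C₀ * y⌉₊ :=
    ⟨⌈C₀ * y⌉₊ - 1, Nat.sub_add_cancel (Nat.ceil_pos.2 (by positivity))⟩
  have hm' : (m + 1 : ℝ) = ⌈C₀ * y⌉₊ := by exact_mod_cast hm
  have hmlow : C₀ * y ≤ m + 1 := by rw [hm']; exact Nat.le_ceil _
  have hmhigh : (m + 1 : ℝ) ≤ (C₀ + 1) * y := by
    rw [hm']
    linarith [Nat.ceil_lt_add_one (mul_pos hC₀0 hy0).le]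
  have hmb : Cb / (m + 1) ≤ ε ^ 2 / 2 := by
    rw [hyε, div_le_div_iff₀ (by positivity) two_pos, inv_mul_eq_div, le_div_iff₀ hy0]
    refine le_trans ?_ hmlow
    rw [hC₀]
    gcongr
    linarith
  have hmn : Cn / (m + 1) ≤ ε ^ 2 / 4 := by
    rw [hyε, div_le_div_iff₀ (by positivity) four_pos, inv_mul_eq_div, le_div_iff₀ hy0]
    refine le_trans ?_ hmlow
    rw [hC₀]
    gcongr
    linarith
  obtain ⟨Λ, hΛ⟩ : ∃ Λ, Λ = (B + 1) * (m + 1 : ℝ) ^ (d + 1) + Real.log (1 / α) := ⟨_, rfl⟩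
  have hΛ0 : 0 ≤ Λ := by rw [hΛ]; positivity
  have hmΛ : (m + 1 : ℝ) ^ (d + 1) ≤ Λ := by
    have : 0 ≤ B * (m + 1 : ℝ) ^ (d + 1) := by positivity
    rw [hΛ]
    linarith
  have hΛle : Λ ≤ Λ₀ * y ^ (d + 1) := by
    have h1 : (m + 1 : ℝ) ^ (d + 1) ≤ (C₀ + 1) ^ (d + 1) * y ^ (d + 1) := by
      rw [← mul_pow]
      gcongr
    have h2 : Real.log (1 / α) * 1 ≤ Real.log (1 / α) * y ^ (d + 1) := by
      gcongr
      exact one_le_pow₀ hy1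
    have h3 : (B + 1) * (m + 1 : ℝ) ^ (d + 1) ≤ (B + 1) * ((C₀ + 1) ^ (d + 1) * y ^ (d + 1)) := by
      gcongr
    rw [hΛ, hΛ₀, add_mul _ _ (y ^ (d + 1)), mul_assoc (B + 1)]
    linarith
  have htail : ∀ i : ℕ,
      μ {ω | ∀ s ≤ i + (d + 1 + ⌈8 * Λ * y⌉₊), ULR d E s ω < 1 / α} ≤
        ENNReal.ofReal (K * Real.exp (-(r / 8 * ε ^ 2 * i))) := by
    intro i
    set t := i + (d + 1 + ⌈8 * Λ * y⌉₊) with ht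
    have hn : (i : ℝ) + 8 * Λ * y ≤ (t - d : ℕ) := by
      have h1 : i + ⌈8 * Λ * y⌉₊ ≤ t - d := by omega
      have h2 : (i : ℝ) + ⌈8 * Λ * y⌉₊ ≤ (t - d : ℕ) := by exact_mod_cast h1
      linarith [Nat.le_ceil (8 * Λ * y)]
    have hni : (i : ℝ) ≤ (t - d : ℕ) := by
      have : 0 ≤ 8 * Λ * y := by positivity
      linarith
    have hnΛ : 8 * Λ ≤ ε ^ 2 * (t - d : ℕ) := by
      rw [hyε, inv_mul_eq_div, le_div_iff₀ hy0]
      have : (0 : ℝ) ≤ i := by positivity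
      linarith
    have hE' := fun (ω : Seq d) hω => hE p hp m t ω (by omega) hω
    rw [← hCn] at hE'
    have hbound := hp.measure_ULR_lt_le hB hμ hα0 hr hv₀ hv₀B hlt hε (by omega : d < t)
      (hCb ▸ hmb) hE' (by
        have : Cn / (m + 1) * (t - d : ℕ) ≤ ε ^ 2 / 4 * (t - d : ℕ) := by gcongr
        linarith)
    have hmono : {ω | ∀ s ≤ t, ULR d E s ω < 1 / α} ⊆ {ω | ULR d E t ω < 1 / α} :=
      fun ω hω => hω t le_rfl
    refine (measure_mono hmono).trans (hbound.trans
      (ENNReal.ofReal_le_ofReal ?_))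
    have hε2 : ε ^ 2 ≤ 1 := pow_le_one₀ hε0.le hε1
    have h1 : Real.exp (-(r / 4 * (t - d : ℕ))) ≤ Real.exp (-(r / 8 * ε ^ 2 * i)) := by
      rw [Real.exp_le_exp, neg_le_neg_iff]
      calc r / 8 * ε ^ 2 * i ≤ r / 8 * 1 * (t - d : ℕ) := by gcongr
        _ ≤ r / 4 * (t - d : ℕ) := by
            rw [mul_one]
            gcongr
            norm_num
    have h2 : Real.exp ((m + 1) ^ (d + 1) - ε ^ 2 / 4 * (t - d : ℕ)) ≤
        Real.exp (-(r / 8 * ε ^ 2 * i)) := by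
      rw [Real.exp_le_exp]
      have : r / 8 * ε ^ 2 * i ≤ 1 / 8 * ε ^ 2 * (t - d : ℕ) := by gcongr
      linarith
    rw [hK, add_mul, one_mul]
    gcongr
  have := hμ.1
  refine (tsum_le_of_exp_tail (fun t => prob_le_one) hK0.le (by positivity) htail).trans
    (ENNReal.ofReal_le_ofReal ?_)
  have hpow : ∀ j ≤ d + 3, y ^ j ≤ y ^ (d + 3) := fun j hj => pow_le_pow_right₀ hy1 hj
  have h0 : 1 ≤ y ^ (d + 3) := one_le_pow₀ hy1
  have h1 : 8 * Λ * y ≤ 8 * Λ₀ * y ^ (d + 3) := by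
    calc 8 * Λ * y ≤ 8 * (Λ₀ * y ^ (d + 1)) * y := by gcongr
      _ = 8 * Λ₀ * y ^ (d + 2) := by ring
      _ ≤ _ := mul_le_mul_of_nonneg_left (hpow _ (by omega)) (by positivity)
  have h2 : K * (1 / (r / 8 * ε ^ 2)) ≤ 8 * K / r * y ^ (d + 3) := by
    calc K * (1 / (r / 8 * ε ^ 2)) = 8 * K / r * y ^ 1 := by
          rw [hyε]
          field_simp
      _ ≤ _ := mul_le_mul_of_nonneg_left (hpow _ (by omega)) (by positivity)
  have h3 : (d + 2 + K) * 1 ≤ (d + 2 + K) * y ^ (d + 3) := by gcongr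
  have h4 := Nat.ceil_lt_add_one (by positivity : 0 ≤ 8 * Λ * y)
  push_cast
  linarith

end SeqTest
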